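/- arXiv:2212.03765 — 6 statements merged into one kernel-verified Lean document; each statement's English description precedes it below -/
import Mathlib

section
/- Let g : ℝⁿ → ℝⁿ and let x* ∈ ℝⁿ satisfy g(x*) = 0. Let x : [0,∞) → ℝⁿ be differentiable with ẋ(t) = g(x(t)) for all t ≥ 0. Suppose V : ℝⁿ → ℝ is continuously differentiable with V(x*) = 0 and V(y) > 0 for all y ≠ x*, and suppose there exist constants a, b > 0, γ₁ ∈ (0,1) and γ₂ > 1 such that ⟨∇V(x(t)), g(x(t))⟩ ≤ −a·V(x(t))^{γ₁} − b·V(x(t))^{γ₂} for all t ≥ 0. Then x(t) = x* for all t ≥ T̄, where T̄ = 1/(a(1−γ₁)) + 1/(b(γ₂−1)). -/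
/-!
Let `w t = V (x t)`. While `w > 0`, the inequality `w' ≤ -c * w ^ γ` says that
`w ^ (1 - γ) / (1 - γ)` decreases at rate at least `c`. For `γ = γ₂ > 1` this function is negative
whatever the initial value, so `w` falls below `1` within time `1 / (b * (γ₂ - 1))`. For
`γ = γ₁ < 1` it is positive and at most `1 / (1 - γ₁)` from then on, so `w` cannot stay positive
for longer than a further `1 / (a * (1 - γ₁))`.
-/

open Set

section DifferentialInequality

variable {w w' : ℝ → ℝ} {c γ s t : ℝ}

theorem pos_of_pos_right_of_hasDerivAt_nonpos (hcont : ContinuousOn w (Icc s t))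
    (hderiv : ∀ u ∈ Ioo s t, 0 < w u → HasDerivAt w (w' u) u)
    (hnonpos : ∀ u ∈ Ioo s t, 0 < w u → w' u ≤ 0) (ht : 0 < w t) :
    ∀ u ∈ Icc s t, 0 < w u := by
  by_contra! ⟨u, hu, hwu⟩
  have hclosed : IsClosed (Icc s t ∩ w ⁻¹' Iic 0) :=
    hcont.preimage_isClosed_of_isClosed isClosed_Icc isClosed_Iic
  obtain ⟨z, ⟨hz, hwz⟩, hlast⟩ :=
    (isCompact_Icc.of_isClosed_subset hclosed inter_subset_left).exists_isGreatest ⟨u, hu, hwu⟩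
  have hsub : Ioo z t ⊆ Ioo s t := Ioo_subset_Ioo_left hz.1
  have hpos : ∀ v ∈ Ioo z t, 0 < w v := fun v hv ↦
    not_le.mp fun hwv ↦ hv.1.not_ge (hlast ⟨Ioo_subset_Icc_self (hsub hv), hwv⟩)
  have hanti : AntitoneOn w (Icc z t) := by
    refine antitoneOn_of_hasDerivWithinAt_nonpos (f' := w') (convex_Icc z t)
      (hcont.mono (Icc_subset_Icc_left hz.1)) ?_ ?_ <;> rw [interior_Icc]
    · exact fun v hv ↦ (hderiv v (hsub hv) (hpos v hv)).hasDerivWithinAt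
    · exact fun v hv ↦ hnonpos v (hsub hv) (hpos v hv)
  exact ht.not_ge ((hanti (left_mem_Icc.mpr hz.2) (right_mem_Icc.mpr hz.2) hz.2).trans hwz)

theorem rpow_one_sub_div_sub_le_of_hasDerivAt_le (hγ : γ ≠ 1) (hst : s ≤ t)
    (hcont : ContinuousOn w (Icc s t)) (hpos : ∀ u ∈ Icc s t, 0 < w u)
    (hderiv : ∀ u ∈ Ioo s t, HasDerivAt w (w' u) u)
    (hle : ∀ u ∈ Ioo s t, w' u ≤ -c * w u ^ γ) :
    w t ^ (1 - γ) / (1 - γ) - w s ^ (1 - γ) / (1 - γ) ≤ -c * (t - s) := by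
  have hpow : ∀ u ∈ Ioo s t,
      HasDerivAt (fun v ↦ w v ^ (1 - γ) / (1 - γ)) (w' u / w u ^ γ) u := by
    intro u hu
    have hwu := hpos u (Ioo_subset_Icc_self hu)
    have hγ' : 1 - γ ≠ 0 := sub_ne_zero.mpr hγ.symm
    have hexp : w' u / w u ^ γ = w' u * (1 - γ) * w u ^ (1 - γ - 1) / (1 - γ) := by
      rw [show 1 - γ - 1 = -γ by ring, Real.rpow_neg hwu.le]
      field_simp
    rw [hexp]
    exact ((hderiv u hu).rpow_const (.inl hwu.ne')).div_const (1 - γ)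
  refine (convex_Icc s t).image_sub_le_mul_sub_of_deriv_le
    ((hcont.rpow_const fun u hu ↦ .inl (hpos u hu).ne').div_const _) ?_ ?_
    s (left_mem_Icc.mpr hst) t (right_mem_Icc.mpr hst) hst <;> rw [interior_Icc]
  · exact fun u hu ↦ (hpow u hu).differentiableAt.differentiableWithinAt
  · intro u hu
    rw [(hpow u hu).deriv, div_le_iff₀ (Real.rpow_pos_of_pos (hpos u (Ioo_subset_Icc_self hu)) γ)]
    exact hle u hu

theorem lt_one_of_hasDerivAt_le_neg_mul_rpow (hc : 0 < c) (hγ : 1 < γ)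
    (hst : 1 / (c * (γ - 1)) ≤ t - s)
    (hcont : ContinuousOn w (Icc s t)) (hpos : ∀ u ∈ Icc s t, 0 < w u)
    (hderiv : ∀ u ∈ Ioo s t, HasDerivAt w (w' u) u)
    (hle : ∀ u ∈ Ioo s t, w' u ≤ -c * w u ^ γ) :
    w t < 1 := by
  have hγ' : 0 < γ - 1 := sub_pos.mpr hγ
  have hs_le : s ≤ t := sub_nonneg.mp ((by positivity : 0 ≤ 1 / (c * (γ - 1))).trans hst)
  have hdecay := rpow_one_sub_div_sub_le_of_hasDerivAt_le hγ.ne' hs_le hcont hpos hderiv hle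
  have hws : 0 < w s ^ (1 - γ) := Real.rpow_pos_of_pos (hpos s (left_mem_Icc.mpr hs_le)) _
  have hwt : 1 < w t ^ (1 - γ) := by
    rw [div_le_iff₀ (mul_pos hc hγ')] at hst
    rw [← sub_div, div_le_iff_of_neg (by linarith)] at hdecay
    linarith
  by_contra! hge
  exact hwt.not_ge (Real.rpow_le_one_of_one_le_of_nonpos hge (by linarith))

theorem sub_lt_of_hasDerivAt_le_neg_mul_rpow (hc : 0 < c) (hγ : γ < 1) (hst : s ≤ t)
    (hcont : ContinuousOn w (Icc s t)) (hpos : ∀ u ∈ Icc s t, 0 < w u)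
    (hderiv : ∀ u ∈ Ioo s t, HasDerivAt w (w' u) u)
    (hle : ∀ u ∈ Ioo s t, w' u ≤ -c * w u ^ γ) :
    t - s < w s ^ (1 - γ) / (c * (1 - γ)) := by
  have hγ' : 0 < 1 - γ := sub_pos.mpr hγ
  have hdecay := rpow_one_sub_div_sub_le_of_hasDerivAt_le hγ.ne hst hcont hpos hderiv hle
  have hwt : 0 < w t ^ (1 - γ) := Real.rpow_pos_of_pos (hpos t (right_mem_Icc.mpr hst)) _
  rw [← sub_div, div_le_iff₀ hγ'] at hdecay
  rw [lt_div_iff₀ (mul_pos hc hγ')]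
  linarith

theorem sub_lt_of_hasDerivAt_le_neg_mul_rpow_sub_mul_rpow {a b γ₁ γ₂ : ℝ}
    (ha : 0 < a) (hb : 0 < b) (hγ₁ : γ₁ < 1) (hγ₂ : 1 < γ₂)
    (hcont : ContinuousOn w (Icc s t)) (hpos : ∀ u ∈ Icc s t, 0 < w u)
    (hderiv : ∀ u ∈ Ioo s t, HasDerivAt w (w' u) u)
    (hle : ∀ u ∈ Ioo s t, w' u ≤ -a * w u ^ γ₁ - b * w u ^ γ₂) :
    t - s < 1 / (a * (1 - γ₁)) + 1 / (b * (γ₂ - 1)) := by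
  by_contra! hlong
  have hT₁ : 0 < 1 / (a * (1 - γ₁)) := one_div_pos.mpr (mul_pos ha (sub_pos.mpr hγ₁))
  have hT₂ : 0 < 1 / (b * (γ₂ - 1)) := one_div_pos.mpr (mul_pos hb (sub_pos.mpr hγ₂))
  obtain ⟨r, hr⟩ : ∃ r, r - s = 1 / (b * (γ₂ - 1)) := ⟨s + 1 / (b * (γ₂ - 1)), by ring⟩
  have hsr : s ≤ r := by linarith
  have hrt : r ≤ t := by linarith
  have hle₁ : ∀ u ∈ Ioo s t, w' u ≤ -a * w u ^ γ₁ := fun u hu ↦ by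
    linarith [hle u hu, mul_pos hb (Real.rpow_pos_of_pos (hpos u (Ioo_subset_Icc_self hu)) γ₂)]
  have hle₂ : ∀ u ∈ Ioo s t, w' u ≤ -b * w u ^ γ₂ := fun u hu ↦ by
    linarith [hle u hu, mul_pos ha (Real.rpow_pos_of_pos (hpos u (Ioo_subset_Icc_self hu)) γ₁)]
  have hlt_one : w r < 1 :=
    lt_one_of_hasDerivAt_le_neg_mul_rpow hb hγ₂ hr.ge (hcont.mono (Icc_subset_Icc_right hrt))
      (fun u hu ↦ hpos u (Icc_subset_Icc_right hrt hu))
      (fun u hu ↦ hderiv u (Ioo_subset_Ioo_right hrt hu))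
      (fun u hu ↦ hle₂ u (Ioo_subset_Ioo_right hrt hu))
  have hshort : t - r < w r ^ (1 - γ₁) / (a * (1 - γ₁)) :=
    sub_lt_of_hasDerivAt_le_neg_mul_rpow ha hγ₁ hrt (hcont.mono (Icc_subset_Icc_left hsr))
      (fun u hu ↦ hpos u (Icc_subset_Icc_left hsr hu))
      (fun u hu ↦ hderiv u (Ioo_subset_Ioo_left hsr hu))
      (fun u hu ↦ hle₁ u (Ioo_subset_Ioo_left hsr hu))
  have hle_one : w r ^ (1 - γ₁) / (a * (1 - γ₁)) ≤ 1 / (a * (1 - γ₁)) := by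
    gcongr
    exact Real.rpow_le_one (hpos r ⟨hsr, hrt⟩).le hlt_one.le (sub_nonneg.mpr hγ₁.le)
  linarith

theorem nonpos_of_hasDerivAt_le_neg_mul_rpow_sub_mul_rpow {a b γ₁ γ₂ : ℝ}
    (ha : 0 < a) (hb : 0 < b) (hγ₁ : γ₁ < 1) (hγ₂ : 1 < γ₂)
    (hcont : ContinuousOn w (Icc s t))
    (hderiv : ∀ u ∈ Ioo s t, 0 < w u → HasDerivAt w (w' u) u)
    (hle : ∀ u ∈ Ioo s t, 0 < w u → w' u ≤ -a * w u ^ γ₁ - b * w u ^ γ₂)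
    (hst : 1 / (a * (1 - γ₁)) + 1 / (b * (γ₂ - 1)) ≤ t - s) :
    w t ≤ 0 := by
  by_contra! hwt
  have hnonpos : ∀ u ∈ Ioo s t, 0 < w u → w' u ≤ 0 := fun u hu hwu ↦ by
    linarith [hle u hu hwu, mul_pos ha (Real.rpow_pos_of_pos hwu γ₁),
      mul_pos hb (Real.rpow_pos_of_pos hwu γ₂)]
  have hpos : ∀ u ∈ Icc s t, 0 < w u :=
    pos_of_pos_right_of_hasDerivAt_nonpos hcont hderiv hnonpos hwt
  exact hst.not_gt <|
    sub_lt_of_hasDerivAt_le_neg_mul_rpow_sub_mul_rpow ha hb hγ₁ hγ₂ hcont hpos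
      (fun u hu ↦ hderiv u hu (hpos u (Ioo_subset_Icc_self hu)))
      (fun u hu ↦ hle u hu (hpos u (Ioo_subset_Icc_self hu)))

end DifferentialInequality

theorem fixed_time_stability_general {E : Type*} [NormedAddCommGroup E] [NormedSpace ℝ E]
    {g : ℝ → E → E} {xstar : E} {x : ℝ → E} (hxcont : ContinuousOn x (Ici 0))
    (hx : ∀ t, 0 < t → HasDerivAt x (g t (x t)) t)
    {V : E → ℝ} (hVcont : Continuous V) (hV : ∀ y, y ≠ xstar → DifferentiableAt ℝ V y)
    (hV0 : V xstar = 0) (hVpos : ∀ y, y ≠ xstar → 0 < V y)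
    {a b γ₁ γ₂ : ℝ} (ha : 0 < a) (hb : 0 < b) (hγ₁ : γ₁ < 1) (hγ₂ : 1 < γ₂)
    (hdec : ∀ t, 0 < t → x t ≠ xstar →
      fderiv ℝ V (x t) (g t (x t)) ≤ -a * V (x t) ^ γ₁ - b * V (x t) ^ γ₂)
    {t : ℝ} (ht : 1 / (a * (1 - γ₁)) + 1 / (b * (γ₂ - 1)) ≤ t) :
    x t = xstar := by
  have hne : ∀ y, 0 < V y → y ≠ xstar := by
    rintro y hy rfl
    exact hy.ne' hV0
  have hVt : V (x t) ≤ 0 :=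
    nonpos_of_hasDerivAt_le_neg_mul_rpow_sub_mul_rpow (w := fun u ↦ V (x u)) ha hb hγ₁ hγ₂
      (hVcont.comp_continuousOn (hxcont.mono Icc_subset_Ici_self))
      (fun u hu hVu ↦ (hV _ (hne _ hVu)).hasFDerivAt.comp_hasDerivAt u (hx u hu.1))
      (fun u hu hVu ↦ hdec u hu.1 (hne _ hVu)) (ht.trans_eq (sub_zero t).symm)
  exact of_not_not fun hxt ↦ hVt.not_gt (hVpos _ hxt)

/-- **Fixed-time stability sufficient condition** (Lemma 1, per-trajectory version).
If a positive-definite C¹ Lyapunov function `V` decreases along the trajectory of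
`ẋ = g(x)` at rate at least `a V^γ₁ + b V^γ₂` with `γ₁ ∈ (0,1)`, `γ₂ > 1`, then the
trajectory reaches the equilibrium `x*` by time `T̄ = 1/(a(1-γ₁)) + 1/(b(γ₂-1))`. -/
theorem fixed_time_stability
    {n : ℕ} (g : (Fin n → ℝ) → (Fin n → ℝ)) (xstar : Fin n → ℝ)
    (hg : g xstar = 0)
    (x : ℝ → (Fin n → ℝ))
    (hx : ∀ t : ℝ, 0 ≤ t → HasDerivAt x (g (x t)) t)
    (V : (Fin n → ℝ) → ℝ) (hV : ContDiff ℝ 1 V)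
    (hV0 : V xstar = 0) (hVpos : ∀ y, y ≠ xstar → 0 < V y)
    (a b γ₁ γ₂ : ℝ) (ha : 0 < a) (hb : 0 < b)
    (hγ₁ : γ₁ ∈ Set.Ioo (0 : ℝ) 1) (hγ₂ : 1 < γ₂)
    (hdec : ∀ t : ℝ, 0 ≤ t →
      fderiv ℝ V (x t) (g (x t)) ≤ -a * V (x t) ^ γ₁ - b * V (x t) ^ γ₂) :
    ∀ t : ℝ, 1 / (a * (1 - γ₁)) + 1 / (b * (γ₂ - 1)) ≤ t → x t = xstar := by
  exact fun t ht ↦ fixed_time_stability_general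
    (fun u hu ↦ (hx u hu).continuousAt.continuousWithinAt) (fun u hu ↦ hx u hu.le) hV.continuous
    (fun y _ ↦ hV.differentiable one_ne_zero y) hV0 hVpos ha hb hγ₁.2 hγ₂
    (fun u hu _ ↦ hdec u hu.le) ht
end

section
/- Let f : ℝⁿ → ℝ be continuously differentiable, satisfy the PL inequality with modulus μ > 0, and possess a unique minimizer x* with f(x*) = f* = min f. Fix p > 2 and q ∈ (1,2), and let x : [0,∞) → ℝⁿ be a differentiable solution of the GenFlow dynamics ẋᵢ(t) = −sign(∇ᵢf(x(t)))·( |∇ᵢf(x(t))|^{1/(p−1)} + |∇ᵢf(x(t))|^{1/(q−1)} ) for i = 1,…,n. Then x(t) = x* for all t ≥ T̄, where T̄ = 1/(a(1−γ₁)) + 1/(b(γ₂−1)) with γ₁ = p/(2(p−1)), γ₂ = q/(2(q−1)), a = (2μ)^{p/(2(p−1))} and b = n^{(q−2)/(2(q−1))}·(2μ)^{q/(2(q−1))}. -/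
/-- The gradient of `f : ℝⁿ → ℝ`, as the vector of partial derivatives. -/
noncomputable def grad {n : ℕ} (f : (Fin n → ℝ) → ℝ) (x : Fin n → ℝ) : Fin n → ℝ :=
  fun i => fderiv ℝ f x (Pi.single i 1)

/-!
Along a trajectory the optimality gap `V = f ∘ x - f*` satisfies
`V' = -∑ |∇ᵢf| ^ (2γ₁) - ∑ |∇ᵢf| ^ (2γ₂)`. Comparing these power sums with `‖∇f‖²` (subadditivity of
`s ↦ s ^ γ₁`, Jensen for `s ↦ s ^ γ₂`) and applying the PL inequality gives
`V' ≤ -(a V ^ γ₁ + b V ^ γ₂)`. Integrating `V' ≤ -b V ^ γ₂` bounds the time needed to bring `V`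
below `1` independently of `V 0`; from there `V' ≤ -a V ^ γ₁` brings `V` to `0` in time at most
`1 / (a (1 - γ₁))`.
-/

open Set
open scoped Matrix

section ScalarComparison

variable {V V' : ℝ → ℝ} {a b c d k u v t : ℝ}

/-- `V ^ (1 - c) / (1 - c)` has derivative `V' / V ^ c ≤ -k` whatever the sign of `1 - c`, so the
decay above `1` (`1 < c`) and below `1` (`c < 1`) obey the same estimate. -/
lemma rpow_div_add_mul_le_of_deriv_le_neg_rpow (hc : c ≠ 1) (huv : u ≤ v)
    (hV : ∀ s ∈ Icc u v, HasDerivWithinAt V (V' s) (Icc u v) s)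
    (hpos : ∀ s ∈ Icc u v, 0 < V s)
    (hle : ∀ s ∈ Icc u v, V' s ≤ -(k * V s ^ c)) :
    V v ^ (1 - c) / (1 - c) + k * (v - u) ≤ V u ^ (1 - c) / (1 - c) := by
  have hc' : 1 - c ≠ 0 := sub_ne_zero.2 hc.symm
  have hderiv : ∀ s ∈ Icc u v, HasDerivWithinAt (fun r => V r ^ (1 - c) / (1 - c) + k * r)
      (V' s / V s ^ c + k) (Icc u v) s := fun s hs => by
    have hpow := ((hV s hs).rpow_const (p := 1 - c) (Or.inl (hpos s hs).ne')).div_const (1 - c)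
    refine (hpow.add ((hasDerivWithinAt_id s _).const_mul k)).congr_deriv ?_
    rw [sub_sub_cancel_left, Real.rpow_neg (hpos s hs).le]
    field_simp
  have hanti : AntitoneOn (fun r => V r ^ (1 - c) / (1 - c) + k * r) (Icc u v) := by
    refine antitoneOn_of_hasDerivWithinAt_nonpos (convex_Icc u v)
      (fun s hs => (hderiv s hs).continuousWithinAt)
      (fun s hs => (hderiv s (interior_subset hs)).mono interior_subset) fun s hs => ?_
    have hs' := interior_subset hs
    have hquot : V' s / V s ^ c ≤ -k := by
      rw [div_le_iff₀ (Real.rpow_pos_of_pos (hpos s hs') c), neg_mul]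
      exact hle s hs'
    linarith
  have huv_le := hanti (left_mem_Icc.2 huv) (right_mem_Icc.2 huv) huv
  simp only at huv_le
  linarith

lemma lt_one_of_deriv_le_neg_rpow (hb : 0 < b) (hd : 1 < d)
    (hV : ∀ s ∈ Icc u v, HasDerivWithinAt V (V' s) (Icc u v) s)
    (hpos : ∀ s ∈ Icc u v, 0 < V s)
    (hle : ∀ s ∈ Icc u v, V' s ≤ -(b * V s ^ d))
    (huv : 1 / (b * (d - 1)) ≤ v - u) : V v < 1 := by
  have hd' : 0 < d - 1 := sub_pos.2 hd
  have huv' : u ≤ v := sub_nonneg.1 (le_trans (by positivity) huv)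
  have hint := rpow_div_add_mul_le_of_deriv_le_neg_rpow hd.ne' huv' hV hpos hle
  have hVu : V u ^ (1 - d) / (1 - d) < 0 :=
    div_neg_of_pos_of_neg (Real.rpow_pos_of_pos (hpos u (left_mem_Icc.2 huv')) _) (by linarith)
  have htime : 1 / (d - 1) ≤ b * (v - u) :=
    calc 1 / (d - 1) = b * (1 / (b * (d - 1))) := by field_simp
      _ ≤ b * (v - u) := by gcongr
  have hVv : 1 < V v ^ (1 - d) := by
    have hlt : V v ^ (1 - d) / (1 - d) < -(1 / (d - 1)) := by linarith
    rwa [← div_neg, neg_sub, div_lt_div_right_of_neg (by linarith)] at hlt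
  by_contra! hge
  exact hVv.not_ge (Real.rpow_le_one_of_one_le_of_nonpos hge (by linarith))

lemma sub_lt_of_deriv_le_neg_rpow (ha : 0 < a) (hc : c < 1) (huv : u ≤ v)
    (hV : ∀ s ∈ Icc u v, HasDerivWithinAt V (V' s) (Icc u v) s)
    (hpos : ∀ s ∈ Icc u v, 0 < V s)
    (hle : ∀ s ∈ Icc u v, V' s ≤ -(a * V s ^ c))
    (hVu : V u ≤ 1) : v - u < 1 / (a * (1 - c)) := by
  have hc' : 0 < 1 - c := sub_pos.2 hc
  have hint := rpow_div_add_mul_le_of_deriv_le_neg_rpow hc.ne huv hV hpos hle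
  have hVu' : V u ^ (1 - c) / (1 - c) ≤ 1 / (1 - c) := by
    gcongr
    exact Real.rpow_le_one (hpos u (left_mem_Icc.2 huv)).le hVu hc'.le
  have hVv : 0 < V v ^ (1 - c) / (1 - c) :=
    div_pos (Real.rpow_pos_of_pos (hpos v (right_mem_Icc.2 huv)) _) hc'
  rw [← div_div, div_right_comm, lt_div_iff₀ ha]
  linarith

theorem eq_zero_of_deriv_le_neg_rpow_add_rpow (ha : 0 < a) (hb : 0 < b) (hc : c < 1) (hd : 1 < d)
    (hV : ∀ s ∈ Icc 0 t, HasDerivWithinAt V (V' s) (Icc 0 t) s)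
    (hnonneg : ∀ s ∈ Icc 0 t, 0 ≤ V s)
    (hle : ∀ s ∈ Icc 0 t, V' s ≤ -(a * V s ^ c + b * V s ^ d))
    (ht : 1 / (a * (1 - c)) + 1 / (b * (d - 1)) ≤ t) : V t = 0 := by
  have hTa : 0 < 1 / (a * (1 - c)) := one_div_pos.2 (mul_pos ha (sub_pos.2 hc))
  have hTb : 0 < 1 / (b * (d - 1)) := one_div_pos.2 (mul_pos hb (sub_pos.2 hd))
  set τ := 1 / (b * (d - 1))
  have hτt : τ ≤ t := by linarith
  have htt : t ∈ Icc 0 t := right_mem_Icc.2 (hTb.le.trans hτt)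
  have hle_a : ∀ s ∈ Icc 0 t, V' s ≤ -(a * V s ^ c) := fun s hs => by
    have := mul_nonneg hb.le (Real.rpow_nonneg (hnonneg s hs) d)
    linarith [hle s hs]
  have hle_b : ∀ s ∈ Icc 0 t, V' s ≤ -(b * V s ^ d) := fun s hs => by
    have := mul_nonneg ha.le (Real.rpow_nonneg (hnonneg s hs) c)
    linarith [hle s hs]
  have hanti : AntitoneOn V (Icc 0 t) :=
    antitoneOn_of_hasDerivWithinAt_nonpos (convex_Icc 0 t)
      (fun s hs => (hV s hs).continuousWithinAt)
      (fun s hs => (hV s (interior_subset hs)).mono interior_subset) fun s hs =>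
        (hle_a s (interior_subset hs)).trans <| neg_nonpos.2 <|
          mul_nonneg ha.le (Real.rpow_nonneg (hnonneg s (interior_subset hs)) c)
  by_contra hne
  have hpos : ∀ s ∈ Icc 0 t, 0 < V s := fun s hs =>
    ((hnonneg t htt).lt_of_ne' hne).trans_le (hanti hs htt hs.2)
  have hfirst : Icc 0 τ ⊆ Icc 0 t := Icc_subset_Icc_right hτt
  have hsecond : Icc τ t ⊆ Icc 0 t := Icc_subset_Icc_left hTb.le
  have hVτ : V τ < 1 := lt_one_of_deriv_le_neg_rpow hb hd
    (fun s hs => (hV s (hfirst hs)).mono hfirst) (fun s hs => hpos s (hfirst hs))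
    (fun s hs => hle_b s (hfirst hs)) (sub_zero τ).ge
  have htime : t - τ < 1 / (a * (1 - c)) := sub_lt_of_deriv_le_neg_rpow ha hc hτt
    (fun s hs => (hV s (hsecond hs)).mono hsecond) (fun s hs => hpos s (hsecond hs))
    (fun s hs => hle_a s (hsecond hs)) hVτ.le
  linarith

end ScalarComparison

section PowerSums

variable {ι : Type*} (s : Finset ι) {w : ι → ℝ} {e : ℝ}

lemma rpow_sum_le_sum_rpow (hw : ∀ i ∈ s, 0 ≤ w i) (he : 0 < e) (he1 : e ≤ 1) :
    (∑ i ∈ s, w i) ^ e ≤ ∑ i ∈ s, w i ^ e :=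
  Finset.le_sum_of_subadditive_on_pred (fun r : ℝ => r ^ e) (0 ≤ ·)
    (Real.zero_rpow he.ne').le (fun _ _ hx hy => Real.rpow_add_le_add_rpow hx hy he.le he1)
    (fun _ _ => add_nonneg) w hw

lemma card_rpow_mul_rpow_sum_le_sum_rpow (hw : ∀ i ∈ s, 0 ≤ w i) (he : 1 ≤ e) :
    (s.card : ℝ) ^ (1 - e) * (∑ i ∈ s, w i) ^ e ≤ ∑ i ∈ s, w i ^ e := by
  rcases s.eq_empty_or_nonempty with rfl | hs
  · simp [Real.zero_rpow (zero_lt_one.trans_le he).ne']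
  have hcard : (0 : ℝ) < s.card := Nat.cast_pos.2 hs.card_pos
  rw [← neg_sub e 1, Real.rpow_neg hcard.le, inv_mul_le_iff₀ (Real.rpow_pos_of_pos hcard _)]
  exact Real.rpow_sum_le_const_mul_sum_rpow_of_nonneg s he hw

lemma self_mul_sign_mul_abs_rpow (he : e ≠ 0) (r : ℝ) :
    r * (Real.sign r * |r| ^ (2 * e - 1)) = (r ^ 2) ^ e := by
  rcases eq_or_ne r 0 with rfl | hr
  · simp [Real.zero_rpow he]
  have habs : r * Real.sign r = |r| := by
    rcases hr.lt_or_gt with hneg | hpos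
    · rw [Real.sign_of_neg hneg, abs_of_neg hneg, mul_neg_one]
    · rw [Real.sign_of_pos hpos, abs_of_pos hpos, mul_one]
  calc r * (Real.sign r * |r| ^ (2 * e - 1)) = |r| ^ (2 * e) := by
        rw [← mul_assoc, habs, Real.rpow_sub_one (abs_ne_zero.2 hr),
          mul_div_cancel₀ _ (abs_ne_zero.2 hr)]
    _ = (r ^ 2) ^ e := by rw [Real.rpow_mul (abs_nonneg r), Real.rpow_two, sq_abs]

end PowerSums

section GenFlow

variable {ι : Type*}

/-- The GenFlow vector field, as a function of the gradient `g` of the objective. It is indexed by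
the powers of the optimality gap that appear in its decay rate: the exponents `1 / (p - 1)` and
`1 / (q - 1)` are `2 * γ₁ - 1` and `2 * γ₂ - 1`. -/
noncomputable def genFlowField (γ₁ γ₂ : ℝ) (g : ι → ℝ) : ι → ℝ := fun i =>
  -(Real.sign (g i) * (|g i| ^ (2 * γ₁ - 1) + |g i| ^ (2 * γ₂ - 1)))

/-- The vector representing a linear functional on `ℝ^ι` in the standard basis. At the derivative
of a function it is the gradient, which extends `grad` to an arbitrary finite index type. -/
def functionalCoords [DecidableEq ι] (L : (ι → ℝ) →L[ℝ] ℝ) : ι → ℝ :=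
  fun i => L (Pi.single i 1)

variable [Fintype ι] {γ₁ γ₂ : ℝ}

lemma functionalCoords_dotProduct [DecidableEq ι] (L : (ι → ℝ) →L[ℝ] ℝ) (w : ι → ℝ) :
    functionalCoords L ⬝ᵥ w = L w := by
  conv_rhs => rw [pi_eq_sum_univ' w, map_sum]
  simp only [dotProduct, functionalCoords, map_smul, smul_eq_mul, mul_comm]

lemma dotProduct_genFlowField (hγ₁ : γ₁ ≠ 0) (hγ₂ : γ₂ ≠ 0) (g : ι → ℝ) :
    g ⬝ᵥ genFlowField γ₁ γ₂ g = -(∑ i, (g i ^ 2) ^ γ₁ + ∑ i, (g i ^ 2) ^ γ₂) := by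
  rw [dotProduct, ← Finset.sum_add_distrib, ← Finset.sum_neg_distrib]
  refine Finset.sum_congr rfl fun i _ => ?_
  rw [genFlowField, mul_neg, mul_add, mul_add, self_mul_sign_mul_abs_rpow hγ₁,
    self_mul_sign_mul_abs_rpow hγ₂]

lemma dotProduct_genFlowField_le_of_le_sum_sq (hγ₁ : γ₁ ∈ Ioc 0 1) (hγ₂ : 1 ≤ γ₂) {g : ι → ℝ}
    {m r : ℝ} (hm : 0 ≤ m) (hr : 0 ≤ r) (hg : m * r ≤ ∑ i, g i ^ 2) :
    g ⬝ᵥ genFlowField γ₁ γ₂ g ≤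
      -(m ^ γ₁ * r ^ γ₁ + (Fintype.card ι : ℝ) ^ (1 - γ₂) * m ^ γ₂ * r ^ γ₂) := by
  have hγ₂pos : 0 < γ₂ := zero_lt_one.trans_le hγ₂
  rw [dotProduct_genFlowField hγ₁.1.ne' hγ₂pos.ne', mul_assoc, ← Real.mul_rpow hm hr,
    ← Real.mul_rpow hm hr, neg_le_neg_iff]
  refine add_le_add ?_ ?_
  · calc (m * r) ^ γ₁ ≤ (∑ i, g i ^ 2) ^ γ₁ := by gcongr; exact hγ₁.1.le
      _ ≤ ∑ i, (g i ^ 2) ^ γ₁ :=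
        rpow_sum_le_sum_rpow _ (fun i _ => sq_nonneg (g i)) hγ₁.1 hγ₁.2
  · calc (Fintype.card ι : ℝ) ^ (1 - γ₂) * (m * r) ^ γ₂
        ≤ (Fintype.card ι : ℝ) ^ (1 - γ₂) * (∑ i, g i ^ 2) ^ γ₂ := by gcongr
      _ ≤ ∑ i, (g i ^ 2) ^ γ₂ :=
        card_rpow_mul_rpow_sum_le_sum_rpow _ (fun i _ => sq_nonneg (g i)) hγ₂

theorem genFlow_fixed_time_convergence_general [DecidableEq ι] (hγ₁ : γ₁ ∈ Ioo 0 1) (hγ₂ : 1 < γ₂)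
    {f : (ι → ℝ) → ℝ} {x : ℝ → ι → ℝ} {μ fstar t : ℝ} (hμ : 0 < μ)
    (hf : ∀ s ∈ Icc 0 t, DifferentiableAt ℝ f (x s))
    (hmin : ∀ s ∈ Icc 0 t, fstar ≤ f (x s))
    (hPL : ∀ s ∈ Icc 0 t,
      μ * (f (x s) - fstar) ≤ (1 / 2) * ∑ i, functionalCoords (fderiv ℝ f (x s)) i ^ 2)
    (hx : ∀ s ∈ Icc 0 t, HasDerivWithinAt x
      (genFlowField γ₁ γ₂ (functionalCoords (fderiv ℝ f (x s)))) (Icc 0 t) s)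
    (ht : 1 / ((2 * μ) ^ γ₁ * (1 - γ₁)) +
      1 / ((Fintype.card ι : ℝ) ^ (1 - γ₂) * (2 * μ) ^ γ₂ * (γ₂ - 1)) ≤ t) :
    f (x t) = fstar := by
  have h2μ : 0 < 2 * μ := by positivity
  have hgap : ∀ s ∈ Icc 0 t, 0 ≤ f (x s) - fstar := fun s hs => sub_nonneg.2 (hmin s hs)
  refine sub_eq_zero.1 ?_
  rcases isEmpty_or_nonempty ι with hι | hι
  · -- The decay rate `0 ^ (1 - γ₂)` degenerates to `0`, but PL already forces the gap to vanish.
    have htt : t ∈ Icc 0 t := by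
      have : 0 < 1 - γ₁ := sub_pos.2 hγ₁.2
      have : 0 < γ₂ - 1 := sub_pos.2 hγ₂
      exact right_mem_Icc.2 (le_trans (by positivity) ht)
    have hPLt := hPL t htt
    rw [Finset.univ_eq_empty, Finset.sum_empty, mul_zero] at hPLt
    exact le_antisymm (nonpos_of_mul_nonpos_right hPLt hμ) (hgap t htt)
  refine eq_zero_of_deriv_le_neg_rpow_add_rpow (V := fun s => f (x s) - fstar)
    (by positivity) (by positivity) hγ₁.2 hγ₂
    (fun s hs => ((hf s hs).hasFDerivAt.comp_hasDerivWithinAt s (hx s hs)).sub_const fstar)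
    hgap (fun s hs => ?_) ht
  rw [← functionalCoords_dotProduct]
  exact dotProduct_genFlowField_le_of_le_sum_sq (Ioo_subset_Ioc_self hγ₁) hγ₂.le h2μ.le
    (hgap s hs) (by linarith [hPL s hs])

end GenFlow

lemma two_mul_div_two_mul_sub_one_sub_one {p : ℝ} (hp : p ≠ 1) :
    2 * (p / (2 * (p - 1))) - 1 = 1 / (p - 1) := by
  have := sub_ne_zero.2 hp
  field_simp
  ring

lemma one_sub_div_two_mul_sub_one {q : ℝ} (hq : q ≠ 1) :
    1 - q / (2 * (q - 1)) = (q - 2) / (2 * (q - 1)) := by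
  have := sub_ne_zero.2 hq
  field_simp
  ring

lemma div_two_mul_sub_one_mem_Ioo {p : ℝ} (hp : 2 < p) : p / (2 * (p - 1)) ∈ Ioo 0 1 :=
  ⟨div_pos (by linarith) (by linarith), (div_lt_one (by linarith)).2 (by linarith)⟩

lemma one_lt_div_two_mul_sub_one {q : ℝ} (hq : q ∈ Ioo 1 2) : 1 < q / (2 * (q - 1)) :=
  (one_lt_div (by linarith [hq.1])).2 (by linarith [hq.2])

/-- **GenFlow fixed-time convergence** (Theorem 1). If `f` is `C¹`, satisfies the
PL inequality with modulus `μ > 0` and has a unique minimizer `x*`, then any solution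
of the GenFlow dynamics `ẋᵢ = -sign(∇ᵢf(x))(|∇ᵢf(x)|^{1/(p-1)} + |∇ᵢf(x)|^{1/(q-1)})`
with `p > 2`, `q ∈ (1,2)` reaches `x*` by the time
`T̄ = 1/(a(1-γ₁)) + 1/(b(γ₂-1))`, `γ₁ = p/(2(p-1))`, `γ₂ = q/(2(q-1))`,
`a = (2μ)^{γ₁}`, `b = n^{(q-2)/(2(q-1))} (2μ)^{γ₂}`. -/
theorem genFlow_fixed_time_convergence
    {n : ℕ} (f : (Fin n → ℝ) → ℝ) (hf : ContDiff ℝ 1 f)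
    (μ : ℝ) (hμ : 0 < μ)
    (xstar : Fin n → ℝ) (fstar : ℝ) (hfstar : fstar = f xstar)
    (hmin : ∀ y, fstar ≤ f y)
    (huniq : ∀ y, (∀ z, f y ≤ f z) → y = xstar)
    (hPL : ∀ y, μ * (f y - fstar) ≤ (1 / 2) * ∑ i, grad f y i ^ 2)
    (p q : ℝ) (hp : 2 < p) (hq : q ∈ Set.Ioo (1 : ℝ) 2)
    (x : ℝ → (Fin n → ℝ))
    (hx : ∀ t : ℝ, 0 ≤ t → ∀ i, HasDerivAt (fun s => x s i)
      (-(Real.sign (grad f (x t) i) *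
          (|grad f (x t) i| ^ (1 / (p - 1)) + |grad f (x t) i| ^ (1 / (q - 1))))) t) :
    ∀ t : ℝ,
      1 / ((2 * μ) ^ (p / (2 * (p - 1))) * (1 - p / (2 * (p - 1)))) +
        1 / ((n : ℝ) ^ ((q - 2) / (2 * (q - 1))) * (2 * μ) ^ (q / (2 * (q - 1))) *
          (q / (2 * (q - 1)) - 1)) ≤ t →
      x t = xstar := by
  intro t ht
  refine huniq _ fun z => (Eq.le ?_).trans (hmin z)
  refine genFlow_fixed_time_convergence_general (div_two_mul_sub_one_mem_Ioo hp)
    (one_lt_div_two_mul_sub_one hq) hμ (fun s _ => hf.differentiable one_ne_zero (x s))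
    (fun s _ => hmin (x s)) (fun s _ => hPL (x s)) (fun s hs => ?_) ?_
  · refine (hasDerivAt_pi.2 fun i => ?_).hasDerivWithinAt
    rw [genFlowField, two_mul_div_two_mul_sub_one_sub_one (one_lt_two.trans hp).ne',
      two_mul_div_two_mul_sub_one_sub_one hq.1.ne']
    exact hx s hs.1 i
  · rwa [one_sub_div_two_mul_sub_one hq.1.ne', Fintype.card_fin]
end

section
/- Let f : ℝⁿ → ℝ be continuously differentiable and satisfy the PL inequality with modulus μ > 0, with f* = min f. Fix p > 2 and q ∈ (1,2), let α = p/(2(p−1)) and β = q/(2(q−1)), and let (x, v) : [0,∞) → ℝⁿ × ℝⁿ be a differentiable solution of the GenFlow(M) dynamics v̇ᵢ = ∇ᵢf(x) − sign(vᵢ)(|vᵢ|^{1/(p−1)} + |vᵢ|^{1/(q−1)}), ẋᵢ = −vᵢ − sign(∇ᵢf(x))(|∇ᵢf(x)|^{1/(p−1)} + |∇ᵢf(x)|^{1/(q−1)}). Define V(t) = (f(x(t)) − f*) + (1/2)∑_{i=1}^n vᵢ(t)². Then for all t ≥ 0, d/dt V(t) ≤ −2^{α}·min(1, μ^{α})·V(t)^{α}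 − 2·n^{(q−2)/(2(q−1))}·min(1, μ^{β})·V(t)^{β}. -/
/-!
In phase space `(x, v)` the gradient of `V` is `z = (∇f(x), v)`. The coupling terms `(-v, ∇f(x))`
of the dynamics are orthogonal to `z`, so only the damping contributes to the dissipation:
`V̇ = -∑ₖ (zₖ²)^α - ∑ₖ (zₖ²)^β`, the sums having `2n` terms. The PL inequality for `f` makes `V`
satisfy a PL inequality with modulus `min 1 μ`, namely `2 min(1,μ) V ≤ ∑ₖ zₖ²`. Since
`α ≤ 1 ≤ β`, subadditivity of `(·)^α` and the power mean inequality for `(·)^β` bring the powers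
outside the sums.
-/

open Finset

section RealPowers

variable {ι : Type*}

lemma mul_sign_mul_abs_rpow {r : ℝ} (hr : r + 1 ≠ 0) (u : ℝ) :
    u * (Real.sign u * |u| ^ r) = (u ^ 2) ^ ((r + 1) / 2) := by
  rcases eq_or_ne u 0 with rfl | hu
  · simp [Real.zero_rpow (div_ne_zero hr two_ne_zero)]
  have hsign : u * Real.sign u = |u| := by
    rcases hu.lt_or_gt with h | h
    · rw [Real.sign_of_neg h, abs_of_neg h, mul_neg_one]
    · rw [Real.sign_of_pos h, abs_of_pos h, mul_one]
  calc u * (Real.sign u * |u| ^ r) = |u| ^ r * |u| := by rw [← mul_assoc, hsign, mul_comm]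
    _ = |u| ^ (r + 1) := (Real.rpow_add_one (abs_ne_zero.2 hu) r).symm
    _ = (u ^ 2) ^ ((r + 1) / 2) := by
      rw [← sq_abs, ← Real.rpow_natCast_mul (abs_nonneg u), Nat.cast_ofNat,
        mul_div_cancel₀ _ two_ne_zero]

lemma rpow_sum_le_sum_rpow_s6 {s : Finset ι} {a : ι → ℝ} (ha : ∀ i ∈ s, 0 ≤ a i) {r : ℝ}
    (hr : 0 < r) (hr1 : r ≤ 1) : (∑ i ∈ s, a i) ^ r ≤ ∑ i ∈ s, a i ^ r :=
  le_sum_of_subadditive_on_pred (fun u : ℝ => u ^ r) (0 ≤ ·) (Real.zero_rpow hr.ne').le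
    (fun _ _ hu hw => Real.rpow_add_le_add_rpow hu hw hr.le hr1) (fun _ _ => add_nonneg) a ha

lemma card_rpow_mul_rpow_sum_le {s : Finset ι} {a : ι → ℝ} (ha : ∀ i ∈ s, 0 ≤ a i) {r : ℝ}
    (hr : 1 ≤ r) : (#s : ℝ) ^ (1 - r) * (∑ i ∈ s, a i) ^ r ≤ ∑ i ∈ s, a i ^ r := by
  rcases s.eq_empty_or_nonempty with rfl | hs
  · simp [Real.zero_rpow (zero_lt_one.trans_le hr).ne']
  have hcard : (0 : ℝ) < #s := by exact_mod_cast hs.card_pos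
  rw [← neg_sub, Real.rpow_neg hcard.le, inv_mul_le_iff₀ (Real.rpow_pos_of_pos hcard _)]
  exact Real.rpow_sum_le_const_mul_sum_rpow_of_nonneg s hr ha

lemma min_one_rpow {m r : ℝ} (hm : 0 ≤ m) (hr : 0 ≤ r) : min 1 (m ^ r) = min 1 m ^ r := by
  rw [(Real.monotoneOn_rpow_Ici_of_exponent_nonneg hr).map_min (Set.mem_Ici.2 zero_le_one) hm,
    Real.one_rpow]

lemma two_mul_min_one_mul_rpow {m w r : ℝ} (hm : 0 ≤ m) (hw : 0 ≤ w) (hr : 0 ≤ r) :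
    (2 * min 1 m * w) ^ r = 2 ^ r * min 1 (m ^ r) * w ^ r := by
  have hmin : 0 ≤ min 1 m := le_min zero_le_one hm
  rw [Real.mul_rpow (by positivity) hw, Real.mul_rpow zero_le_two hmin, min_one_rpow hm hr]

lemma two_mul_rpow_one_sub_mul_two_rpow {c : ℝ} (hc : 0 ≤ c) (r : ℝ) :
    (2 * c) ^ (1 - r) * 2 ^ r = 2 * c ^ (1 - r) := by
  rw [Real.mul_rpow zero_le_two hc, mul_right_comm, ← Real.rpow_add two_pos, sub_add_cancel,
    Real.rpow_one]

end RealPowers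

section Damping

/-- The scalar damping nonlinearity of GenFlow(M): the sum of the odd extensions to `ℝ` of the
powers `1 / (p - 1)` and `1 / (q - 1)`. -/
noncomputable def genFlowDamping (p q u : ℝ) : ℝ :=
  Real.sign u * (|u| ^ (1 / (p - 1)) + |u| ^ (1 / (q - 1)))

variable {p q : ℝ}

lemma div_two_mul_sub_one_mem_Ioc (hp : 2 ≤ p) : p / (2 * (p - 1)) ∈ Set.Ioc 0 1 := by
  have hp0 : 0 < p - 1 := by linarith
  exact ⟨by positivity, (div_le_one (by positivity)).2 (by linarith)⟩

lemma one_le_div_two_mul_sub_one (hq : q ∈ Set.Ioc 1 2) : 1 ≤ q / (2 * (q - 1)) :=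
  (one_le_div (mul_pos two_pos (sub_pos.2 hq.1))).2 (by linarith [hq.2])

lemma mul_genFlowDamping (hp : 1 < p) (hq : 1 < q) (u : ℝ) :
    u * genFlowDamping p q u = (u ^ 2) ^ (p / (2 * (p - 1))) + (u ^ 2) ^ (q / (2 * (q - 1))) := by
  have power {r : ℝ} (hr : 1 < r) :
      u * (Real.sign u * |u| ^ (1 / (r - 1))) = (u ^ 2) ^ (r / (2 * (r - 1))) := by
    have hr0 : 0 < r - 1 := sub_pos.2 hr
    rw [mul_sign_mul_abs_rpow (by positivity)]
    congr 1
    field_simp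
    ring
  rw [genFlowDamping, mul_add, mul_add, power hp, power hq]

lemma le_sum_mul_genFlowDamping {κ : Type*} [Fintype κ] (hp : 2 ≤ p) (hq : q ∈ Set.Ioc 1 2)
    {z : κ → ℝ} {c : ℝ} (hc : 0 ≤ c) (hcz : c ≤ ∑ k, z k ^ 2) :
    c ^ (p / (2 * (p - 1))) +
        (Fintype.card κ : ℝ) ^ (1 - q / (2 * (q - 1))) * c ^ (q / (2 * (q - 1))) ≤
      ∑ k, z k * genFlowDamping p q (z k) := by
  obtain ⟨hα, hα1⟩ := div_two_mul_sub_one_mem_Ioc hp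
  simp only [mul_genFlowDamping (one_lt_two.trans_le hp) hq.1, sum_add_distrib]
  have hβ := one_le_div_two_mul_sub_one hq
  have hz : ∀ k ∈ univ, 0 ≤ z k ^ 2 := fun k _ => sq_nonneg (z k)
  refine add_le_add ?_ ?_
  · exact (Real.rpow_le_rpow hc hcz hα.le).trans (rpow_sum_le_sum_rpow_s6 hz hα hα1)
  · refine le_trans ?_ (card_rpow_mul_rpow_sum_le hz hβ)
    rw [card_univ]
    gcongr

end Damping

section Lyapunov

variable {n : ℕ}

/-- The Lyapunov function `V` of GenFlow(M) on phase space: objective gap plus kinetic energy. -/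
noncomputable def genFlowLyapunov (f : (Fin n → ℝ) → ℝ) (fstar : ℝ) (x v : Fin n → ℝ) : ℝ :=
  (f x - fstar) + (1 / 2) * ∑ i, v i ^ 2

/-- The gradient `(∇f(x), v)` of the Lyapunov function on phase space `ℝⁿ × ℝⁿ`, whose coordinates
are indexed by `Fin n ⊕ Fin n`. -/
noncomputable def genFlowLyapunovGrad (f : (Fin n → ℝ) → ℝ) (x v : Fin n → ℝ) :
    Fin n ⊕ Fin n → ℝ :=
  Sum.elim (grad f x) v

variable {f : (Fin n → ℝ) → ℝ} {fstar : ℝ}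

lemma genFlowLyapunov_nonneg {x : Fin n → ℝ} (hmin : fstar ≤ f x) (v : Fin n → ℝ) :
    0 ≤ genFlowLyapunov f fstar x v :=
  add_nonneg (sub_nonneg.2 hmin) (by positivity)

lemma two_mul_min_one_mul_genFlowLyapunov_le {μ : ℝ} {x : Fin n → ℝ} (hmin : fstar ≤ f x)
    (hPL : μ * (f x - fstar) ≤ (1 / 2) * ∑ i, grad f x i ^ 2) (v : Fin n → ℝ) :
    2 * min 1 μ * genFlowLyapunov f fstar x v ≤ ∑ k, genFlowLyapunovGrad f x v k ^ 2 := by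
  have potential : min 1 μ * (f x - fstar) ≤ μ * (f x - fstar) :=
    mul_le_mul_of_nonneg_right (min_le_right 1 μ) (sub_nonneg.2 hmin)
  have kinetic : min 1 μ * ∑ i, v i ^ 2 ≤ 1 * ∑ i, v i ^ 2 :=
    mul_le_mul_of_nonneg_right (min_le_left 1 μ) (by positivity)
  simp only [genFlowLyapunovGrad, Fintype.sum_sum_type, Sum.elim_inl, Sum.elim_inr]
  rw [genFlowLyapunov]
  linarith

lemma fderiv_apply_eq_sum_grad (f : (Fin n → ℝ) → ℝ) (x w : Fin n → ℝ) :
    fderiv ℝ f x w = ∑ i, grad f x i * w i := by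
  conv_lhs => rw [pi_eq_sum_univ' w]
  simp only [map_sum, map_smul, smul_eq_mul, grad, mul_comm]

variable {x v : ℝ → Fin n → ℝ} {t : ℝ}

lemma hasDerivAt_genFlowLyapunov {x' v' : Fin n → ℝ} (hf : DifferentiableAt ℝ f (x t))
    (hx : HasDerivAt x x' t) (hv : HasDerivAt v v' t) :
    HasDerivAt (fun s => genFlowLyapunov f fstar (x s) (v s))
      (∑ i, (grad f (x t) i * x' i + v t i * v' i)) t := by
  have potential := (hf.hasFDerivAt.comp_hasDerivAt t hx).sub_const fstar
  have kinetic := (HasDerivAt.fun_sum (u := univ) fun i _ =>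
    (hasDerivAt_pi.1 hv i).fun_pow 2).const_mul (1 / 2 : ℝ)
  refine (potential.add kinetic).congr_deriv ?_
  rw [fderiv_apply_eq_sum_grad, mul_sum, ← sum_add_distrib]
  refine sum_congr rfl fun i _ => ?_
  push_cast
  ring

lemma hasDerivAt_genFlowLyapunov_of_genFlowM {p q : ℝ} (hf : DifferentiableAt ℝ f (x t))
    (hv : HasDerivAt v (fun i => grad f (x t) i - genFlowDamping p q (v t i)) t)
    (hx : HasDerivAt x (fun i => -v t i - genFlowDamping p q (grad f (x t) i)) t) :
    HasDerivAt (fun s => genFlowLyapunov f fstar (x s) (v s))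
      (-∑ k, genFlowLyapunovGrad f (x t) (v t) k *
        genFlowDamping p q (genFlowLyapunovGrad f (x t) (v t) k)) t := by
  refine (hasDerivAt_genFlowLyapunov hf hx hv).congr_deriv ?_
  simp only [genFlowLyapunovGrad, Fintype.sum_sum_type, Sum.elim_inl, Sum.elim_inr,
    ← sum_add_distrib, ← sum_neg_distrib]
  exact sum_congr rfl fun i _ => by ring

theorem genFlowM_lyapunov_differential_inequality_general {μ p q : ℝ} (hμ : 0 ≤ μ)
    (hp : 2 ≤ p) (hq : q ∈ Set.Ioc 1 2) (hf : DifferentiableAt ℝ f (x t))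
    (hmin : fstar ≤ f (x t))
    (hPL : μ * (f (x t) - fstar) ≤ (1 / 2) * ∑ i, grad f (x t) i ^ 2)
    (hv : HasDerivAt v (fun i => grad f (x t) i - genFlowDamping p q (v t i)) t)
    (hx : HasDerivAt x (fun i => -v t i - genFlowDamping p q (grad f (x t) i)) t) :
    DifferentiableAt ℝ (fun s => genFlowLyapunov f fstar (x s) (v s)) t ∧
      deriv (fun s => genFlowLyapunov f fstar (x s) (v s)) t ≤
        -(2 : ℝ) ^ (p / (2 * (p - 1))) * min 1 (μ ^ (p / (2 * (p - 1)))) *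
            genFlowLyapunov f fstar (x t) (v t) ^ (p / (2 * (p - 1))) -
          2 * (n : ℝ) ^ ((q - 2) / (2 * (q - 1))) * min 1 (μ ^ (q / (2 * (q - 1)))) *
            genFlowLyapunov f fstar (x t) (v t) ^ (q / (2 * (q - 1))) := by
  have hV := hasDerivAt_genFlowLyapunov_of_genFlowM (fstar := fstar) hf hv hx
  refine ⟨hV.differentiableAt, hV.deriv.trans_le ?_⟩
  have hq0 : 0 < q - 1 := sub_pos.2 hq.1
  have hα := (div_two_mul_sub_one_mem_Ioc hp).1.le
  have hβ := zero_le_one.trans (one_le_div_two_mul_sub_one hq)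
  have hV0 := genFlowLyapunov_nonneg hmin (v t)
  have hPLV := two_mul_min_one_mul_genFlowLyapunov_le hmin hPL (v t)
  have dissipation := le_sum_mul_genFlowDamping hp hq (by positivity) hPLV
  have hcard : (Fintype.card (Fin n ⊕ Fin n) : ℝ) = 2 * n := by
    rw [Fintype.card_sum, Fintype.card_fin, Nat.cast_add, two_mul]
  have hexp : (q - 2) / (2 * (q - 1)) = 1 - q / (2 * (q - 1)) := by field_simp; ring
  rw [two_mul_min_one_mul_rpow hμ hV0 hα, two_mul_min_one_mul_rpow hμ hV0 hβ, hcard,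
    ← mul_assoc, ← mul_assoc, two_mul_rpow_one_sub_mul_two_rpow n.cast_nonneg, ← hexp]
    at dissipation
  linarith

end Lyapunov

/-- **Key differential inequality in the proof of Theorem 2.** Along any solution of
the GenFlow(M) dynamics for a `C¹` function `f` satisfying the PL inequality with
modulus `μ > 0`, the Lyapunov function `V(t) = (f(x(t)) - f*) + (1/2)∑ᵢ vᵢ(t)²`
satisfies `V̇ ≤ -2^α min(1,μ^α) V^α - 2 n^{(q-2)/(2(q-1))} min(1,μ^β) V^β` with
`α = p/(2(p-1))`, `β = q/(2(q-1))`. -/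
theorem genFlowM_lyapunov_differential_inequality
    {n : ℕ} (f : (Fin n → ℝ) → ℝ) (hf : ContDiff ℝ 1 f)
    (μ : ℝ) (hμ : 0 < μ)
    (fstar : ℝ) (hfstar : ∃ xstar, f xstar = fstar ∧ ∀ y, fstar ≤ f y)
    (hPL : ∀ y, μ * (f y - fstar) ≤ (1 / 2) * ∑ i, grad f y i ^ 2)
    (p q : ℝ) (hp : 2 < p) (hq : q ∈ Set.Ioo (1 : ℝ) 2)
    (x v : ℝ → (Fin n → ℝ))
    (hv : ∀ t : ℝ, 0 ≤ t → ∀ i, HasDerivAt (fun s => v s i)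
      (grad f (x t) i -
        Real.sign (v t i) * (|v t i| ^ (1 / (p - 1)) + |v t i| ^ (1 / (q - 1)))) t)
    (hx : ∀ t : ℝ, 0 ≤ t → ∀ i, HasDerivAt (fun s => x s i)
      (-v t i -
        Real.sign (grad f (x t) i) *
          (|grad f (x t) i| ^ (1 / (p - 1)) + |grad f (x t) i| ^ (1 / (q - 1)))) t) :
    ∀ t : ℝ, 0 ≤ t →
      deriv (fun s => (f (x s) - fstar) + (1 / 2) * ∑ i, v s i ^ 2) t ≤
        -(2 : ℝ) ^ (p / (2 * (p - 1))) * min 1 (μ ^ (p / (2 * (p - 1)))) *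
            ((f (x t) - fstar) + (1 / 2) * ∑ i, v t i ^ 2) ^ (p / (2 * (p - 1))) -
          2 * (n : ℝ) ^ ((q - 2) / (2 * (q - 1))) * min 1 (μ ^ (q / (2 * (q - 1)))) *
            ((f (x t) - fstar) + (1 / 2) * ∑ i, v t i ^ 2) ^ (q / (2 * (q - 1))) := by
  obtain ⟨_, -, hmin⟩ := hfstar
  exact fun t ht => (genFlowM_lyapunov_differential_inequality_general hμ.le hp.le
    (Set.Ioo_subset_Ioc_self hq) (hf.differentiable one_ne_zero (x t)) (hmin (x t)) (hPL (x t))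
    (hasDerivAt_pi.2 (hv t ht)) (hasDerivAt_pi.2 (hx t ht))).2
end

section
/- Let f : ℝⁿ → ℝ be continuously differentiable, fix p > 2 and q ∈ (1,2), and let x : [0,∞) → ℝⁿ be a differentiable solution of the GenFlow dynamics ẋᵢ(t) = −sign(∇ᵢf(x(t)))·( |∇ᵢf(x(t))|^{1/(p−1)} + |∇ᵢf(x(t))|^{1/(q−1)} ). Then for every t ≥ 0, d/dt f(x(t)) = −∑_{i=1}^n |∇ᵢf(x(t))|^{p/(p−1)} − ∑_{i=1}^n |∇ᵢf(x(t))|^{q/(q−1)} ≤ −n^{−1/(p−1)} ‖∇f(x(t))‖₁^{p/(p−1)} − n^{−1/(q−1)} ‖∇f(x(t))‖₁^{q/(q−1)}, where ‖·‖₁ is the ℓ¹ norm on ℝⁿ. -/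
/-!
By the chain rule, `d/dt f(x) = ∑ᵢ ∇ᵢf(x) ẋᵢ`, and since `sign a * a = |a|` a velocity term
`-sign(∇ᵢf) |∇ᵢf|^α` contributes `-|∇ᵢf|^(α+1)`. For `α = 1/(r-1)` one has `α + 1 = r/(r-1)`, so
these are the exponents in the rate. The `ℓ¹` bound is the power mean inequality
`(∑ᵢ |gᵢ|)^(α+1) ≤ n^α ∑ᵢ |gᵢ|^(α+1)`, applied to each of the two sums.
-/

theorem real_sign_mul_self (a : ℝ) : Real.sign a * a = |a| := by
  rcases lt_trichotomy a 0 with h_neg | rfl | h_pos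
  · rw [Real.sign_of_neg h_neg, abs_of_neg h_neg, neg_one_mul]
  · rw [mul_zero, abs_zero]
  · rw [Real.sign_of_pos h_pos, abs_of_pos h_pos, one_mul]

theorem mul_real_sign_mul_abs_rpow (a : ℝ) {α : ℝ} (hα : α + 1 ≠ 0) :
    a * (Real.sign a * |a| ^ α) = |a| ^ (α + 1) := by
  rw [Real.rpow_add_one' (abs_nonneg a) hα, ← real_sign_mul_self]
  ring

theorem card_rpow_neg_mul_sum_abs_rpow_le {ι : Type*} (s : Finset ι) (g : ι → ℝ) {α : ℝ}
    (hα : 0 ≤ α) :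
    (s.card : ℝ) ^ (-α) * (∑ i ∈ s, |g i|) ^ (α + 1) ≤ ∑ i ∈ s, |g i| ^ (α + 1) := by
  rcases s.eq_empty_or_nonempty with rfl | hs
  · have hα' : α + 1 ≠ 0 := by positivity
    simp [Real.zero_rpow hα']
  · have hcard : (0 : ℝ) < s.card := Nat.cast_pos.2 hs.card_pos
    rw [Real.rpow_neg hcard.le, inv_mul_le_iff₀ (Real.rpow_pos_of_pos hcard α)]
    simpa only [add_sub_cancel_right] using
      Real.rpow_sum_le_const_mul_sum_rpow s g (le_add_of_nonneg_left hα)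

theorem self_div_self_sub_one {K : Type*} [Field K] {r : K} (hr : r ≠ 1) :
    r / (r - 1) = 1 / (r - 1) + 1 := by
  rw [div_add_one (sub_ne_zero.2 hr), add_sub_cancel]

section Derivative

variable {n : ℕ} {f : (Fin n → ℝ) → ℝ} {x : ℝ → Fin n → ℝ} {t : ℝ}

theorem fderiv_apply_eq_sum_grad_mul (f : (Fin n → ℝ) → ℝ) (y v : Fin n → ℝ) :
    fderiv ℝ f y v = ∑ i, grad f y i * v i := by
  conv_lhs => rw [pi_eq_sum_univ' v]
  simp only [map_sum, map_smul, smul_eq_mul, grad, mul_comm]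

theorem hasDerivAt_comp_sum_grad_mul {v : Fin n → ℝ} (hf : DifferentiableAt ℝ f (x t))
    (hx : ∀ i, HasDerivAt (fun s => x s i) (v i) t) :
    HasDerivAt (fun s => f (x s)) (∑ i, grad f (x t) i * v i) t := by
  rw [← fderiv_apply_eq_sum_grad_mul]
  exact hf.hasFDerivAt.comp_hasDerivAt t (hasDerivAt_pi.2 hx)

theorem hasDerivAt_comp_of_sign_rpow_flow {α β : ℝ} (hα : α + 1 ≠ 0) (hβ : β + 1 ≠ 0)
    (hf : DifferentiableAt ℝ f (x t))
    (hx : ∀ i, HasDerivAt (fun s => x s i)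
      (-(Real.sign (grad f (x t) i) * (|grad f (x t) i| ^ α + |grad f (x t) i| ^ β))) t) :
    HasDerivAt (fun s => f (x s))
      (-(∑ i, |grad f (x t) i| ^ (α + 1)) - ∑ i, |grad f (x t) i| ^ (β + 1)) t := by
  convert hasDerivAt_comp_sum_grad_mul hf hx using 1
  simp only [← mul_real_sign_mul_abs_rpow _ hα, ← mul_real_sign_mul_abs_rpow _ hβ,
    ← Finset.sum_neg_distrib, ← Finset.sum_sub_distrib]
  exact Finset.sum_congr rfl fun i _ => by ring

theorem genFlow_descent_rate_l1_general {p q : ℝ} (hp : 1 < p) (hq : 1 < q)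
    (hf : DifferentiableAt ℝ f (x t))
    (hx : ∀ i, HasDerivAt (fun s => x s i)
      (-(Real.sign (grad f (x t) i) *
          (|grad f (x t) i| ^ (1 / (p - 1)) + |grad f (x t) i| ^ (1 / (q - 1))))) t) :
    HasDerivAt (fun s => f (x s))
        (-(∑ i, |grad f (x t) i| ^ (p / (p - 1))) -
          ∑ i, |grad f (x t) i| ^ (q / (q - 1))) t ∧
      deriv (fun s => f (x s)) t ≤
        -(n : ℝ) ^ (-1 / (p - 1)) * (∑ i, |grad f (x t) i|) ^ (p / (p - 1)) -
          (n : ℝ) ^ (-1 / (q - 1)) * (∑ i, |grad f (x t) i|) ^ (q / (q - 1)) := by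
  have hα : 0 < 1 / (p - 1) := one_div_pos.2 (sub_pos.2 hp)
  have hβ : 0 < 1 / (q - 1) := one_div_pos.2 (sub_pos.2 hq)
  have h_deriv := hasDerivAt_comp_of_sign_rpow_flow (by positivity) (by positivity) hf hx
  have h_mean_p := card_rpow_neg_mul_sum_abs_rpow_le Finset.univ (grad f (x t)) hα.le
  have h_mean_q := card_rpow_neg_mul_sum_abs_rpow_le Finset.univ (grad f (x t)) hβ.le
  rw [Finset.card_fin] at h_mean_p h_mean_q
  simp only [self_div_self_sub_one hp.ne', self_div_self_sub_one hq.ne', neg_div]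
  refine ⟨h_deriv, ?_⟩
  rw [h_deriv.deriv]
  linarith

end Derivative

/-- **ℓ¹ descent estimate from the proof of Theorem 3.** Along any solution of the
GenFlow dynamics,
`d/dt f(x(t)) = -∑ᵢ |∇ᵢf(x(t))|^{p/(p-1)} - ∑ᵢ |∇ᵢf(x(t))|^{q/(q-1)}`
` ≤ -n^{-1/(p-1)} ‖∇f(x(t))‖₁^{p/(p-1)} - n^{-1/(q-1)} ‖∇f(x(t))‖₁^{q/(q-1)}`. -/
theorem genFlow_descent_rate_l1
    {n : ℕ} (f : (Fin n → ℝ) → ℝ) (hf : ContDiff ℝ 1 f)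
    (p q : ℝ) (hp : 2 < p) (hq : q ∈ Set.Ioo (1 : ℝ) 2)
    (x : ℝ → (Fin n → ℝ))
    (hx : ∀ t : ℝ, 0 ≤ t → ∀ i, HasDerivAt (fun s => x s i)
      (-(Real.sign (grad f (x t) i) *
          (|grad f (x t) i| ^ (1 / (p - 1)) + |grad f (x t) i| ^ (1 / (q - 1))))) t) :
    ∀ t : ℝ, 0 ≤ t →
      deriv (fun s => f (x s)) t =
        -(∑ i, |grad f (x t) i| ^ (p / (p - 1))) -
          ∑ i, |grad f (x t) i| ^ (q / (q - 1)) ∧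
      deriv (fun s => f (x s)) t ≤
        -(n : ℝ) ^ (-1 / (p - 1)) * (∑ i, |grad f (x t) i|) ^ (p / (p - 1)) -
          (n : ℝ) ^ (-1 / (q - 1)) * (∑ i, |grad f (x t) i|) ^ (q / (q - 1)) := by
  intro t ht
  exact (genFlow_descent_rate_l1_general (by linarith) hq.1
    (hf.differentiable one_ne_zero (x t)) (hx t ht)).imp_left HasDerivAt.deriv
end

section
/- Let f : ℝⁿ → ℝ be twice continuously differentiable with a non-degenerate saddle point x* (i.e., ∇f(x*) = 0 and H = D²f(x*) is nonsingular), and let Λ_max and Λ_min denote the maximum and minimum absolute eigenvalues of H. Fix p > 2, q ∈ (1,2) and let x : [0,∞) → ℝⁿ be a differentiable solution of the GenFlow dynamics ẋᵢ(t) = −sign(∇ᵢf(x(t)))·(|∇ᵢf(x(t))|^{1/(p−1)} + |∇ᵢf(x(t))|^{1/(q−1)}) that does not converge to x*. Then there exist constants k₁ > 1/2 and k₂ ∈ (0,1) such that for all sufficiently small r > 0, the one-dimensional Lebesgue measure of the set {t ≥ 0 : x(t) ∈ B_r(x*) \ {x*}} is at most min{ n^{1/(p−1)} · (8k₁ / k₂^{p/(p−1)})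 · Λ_max^{(p−2)/(2(p−1))} / Λ_min^{p/(2(p−1))} · r^{(p−2)/(p−1)}, n^{1/(q−1)} · (8k₁ / k₂^{q/(q−1)}) · Λ_max^{(q−2)/(2(q−1))} / Λ_min^{q/(2(q−1))} · r^{(q−2)/(q−1)} }. -/
open Matrix MeasureTheory

/-- The Hessian matrix of `f : ℝⁿ → ℝ` at `x`, as the matrix of second partial
derivatives. -/
noncomputable def hess {n : ℕ} (f : (Fin n → ℝ) → ℝ) (x : Fin n → ℝ) :
    Matrix (Fin n) (Fin n) ℝ :=
  Matrix.of fun i j =>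
    fderiv ℝ (fun y => fderiv ℝ f y (Pi.single j 1)) x (Pi.single i 1)

/-!
Let `m = max p q` and `ρ = 1 / (m - 1) < 1`. Along a GenFlow solution the height `h = f ∘ x - f x*`
satisfies `h' ≤ -∑ᵢ |∇ᵢf|^(1+ρ) ≤ -(|∇f|²)^s` with `s = (1 + ρ) / 2`, by subadditivity of `u ↦ u^s`.
Near a non-degenerate critical point the second-order Taylor expansions of `f` and `|∇f|²` give the
Polyak–Łojasiewicz inequality `Λmin |f - f x*| ≤ |∇f|²` and the bound `|f - f x*| ≤ Λmax |y - x*|²`.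
Hence `h' ≤ -(Λmin |h|)^s < 0` at the times spent in the punctured ball of radius `r`. As `h` is
injective on the set of these times, the substitution `u = h t` bounds its measure by the integral
of `|u|^(-s) / Λmin^s` over `|u| ≤ Λmax r²`, which is of order `r^(1-ρ)`; all visits to the ball are
counted at once. The term of the minimum with the smaller parameter involves a smaller power of `r`,
so it is the larger one for small `r`.
-/

open Set Filter Topology Asymptotics

theorem rpow_sum_le_sum_rpow_s14 {ι : Type*} (s : Finset ι) {u : ι → ℝ} (hu : ∀ i ∈ s, 0 ≤ u i)
    {p : ℝ} (hp : 0 < p) (hp1 : p ≤ 1) : (∑ i ∈ s, u i) ^ p ≤ ∑ i ∈ s, u i ^ p :=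
  Finset.le_sum_of_subadditive_on_pred (· ^ p) (0 ≤ ·) (Real.zero_rpow hp.ne').le
    (fun _ _ ha hb => Real.rpow_add_le_add_rpow ha hb hp.le hp1) (fun _ _ => add_nonneg) u hu

theorem lintegral_Icc_abs_rpow {M s : ℝ} (hM : 0 ≤ M) (hs : -1 < s) :
    ∫⁻ u in Icc (-M) M, ENNReal.ofReal (|u| ^ s) =
      ENNReal.ofReal (2 * M ^ (s + 1) / (s + 1)) := by
  have hint : ∀ a b, IntervalIntegrable (fun u : ℝ => |u| ^ s) volume a b := fun a b =>
    intervalIntegrable_of_even (f := fun u : ℝ => |u| ^ s) (fun u => by rw [abs_neg])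
      (fun b hb => (intervalIntegral.intervalIntegrable_rpow' hs).congr fun u hu => by
        rw [uIoc_of_le hb.le] at hu
        rw [abs_of_pos hu.1])
  have hright : ∫ u in 0..M, |u| ^ s = M ^ (s + 1) / (s + 1) := by
    have habs : EqOn (fun u : ℝ => |u| ^ s) (fun u => u ^ s) (uIcc 0 M) := fun u hu => by
      simp only [abs_of_nonneg (uIcc_of_le hM ▸ hu).1]
    rw [intervalIntegral.integral_congr habs, integral_rpow (Or.inl hs),
      Real.zero_rpow (by linarith), sub_zero]
  have hleft : ∫ u in -M..0, |u| ^ s = M ^ (s + 1) / (s + 1) := by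
    simpa [hright] using intervalIntegral.integral_comp_neg (a := -M) (b := 0) (fun u => |u| ^ s)
  rw [setLIntegral_congr Ioc_ae_eq_Icc.symm, ← ofReal_integral_eq_lintegral_ofReal
    (hint (-M) M).1 (ae_of_all _ fun u => by positivity),
    ← intervalIntegral.integral_of_le (by linarith),
    ← intervalIntegral.integral_add_adjacent_intervals (hint (-M) 0) (hint 0 M), hleft, hright]
  ring_nf

theorem injOn_of_antitoneOn_of_hasDerivAt_neg {T S : Set ℝ} (hT : T.OrdConnected) (hST : S ⊆ T)
    {h h' : ℝ → ℝ} (hanti : AntitoneOn h T) (hd : ∀ t ∈ S, HasDerivAt h (h' t) t)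
    (hneg : ∀ t ∈ S, h' t < 0) : InjOn h S := by
  have ne_of_lt : ∀ t ∈ S, ∀ t' ∈ S, t < t' → h t ≠ h t' := by
    intro t ht t' ht' hlt heq
    have hconst : EqOn h (fun _ => h t) (Icc t t') := fun u hu =>
      have huT : u ∈ T := hT.out (hST ht) (hST ht') hu
      le_antisymm (hanti (hST ht) huT hu.1) (heq ▸ hanti huT (hST ht') hu.2)
    have hzero : HasDerivWithinAt h 0 (Icc t t') t :=
      (hasDerivWithinAt_const t _ (h t)).congr hconst rfl
    exact (hneg t ht).ne <|
      (uniqueDiffOn_Icc hlt t (left_mem_Icc.2 hlt.le)).eq_deriv _ (hd t ht).hasDerivWithinAt hzero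
  intro t ht t' ht' heq
  rcases lt_trichotomy t t' with hlt | rfl | hlt
  · exact absurd heq (ne_of_lt t ht t' ht' hlt)
  · rfl
  · exact absurd heq.symm (ne_of_lt t' ht' t ht hlt)

theorem volume_le_of_mul_abs_rpow_le_abs_deriv {S : Set ℝ} (hS : MeasurableSet S) {h h' : ℝ → ℝ}
    (hd : ∀ t ∈ S, HasDerivWithinAt h (h' t) S t) (hinj : InjOn h S) {a s M : ℝ} (ha : 0 < a)
    (hs : s < 1) (hM : 0 ≤ M) (hrate : ∀ t ∈ S, a * |h t| ^ s ≤ |h' t|)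
    (hbound : ∀ t ∈ S, |h t| ≤ M) :
    volume S ≤ ENNReal.ofReal (2 * M ^ (1 - s) / ((1 - s) * a)) := by
  have hzero : ∀ᵐ t ∂volume.restrict S, h t ≠ 0 := by
    rw [ae_restrict_iff' hS]
    have hsub : (S ∩ h ⁻¹' {0}).Subsingleton := fun t ht t' ht' =>
      hinj ht.1 ht'.1 (ht.2.trans ht'.2.symm)
    filter_upwards [measure_eq_zero_iff_ae_notMem.1 (hsub.measure_zero volume)] with t ht htS h0
    exact ht ⟨htS, h0⟩
  have hdensity : ∀ᵐ t ∂volume.restrict S,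
      ENNReal.ofReal a ≤ ENNReal.ofReal |h' t| * ENNReal.ofReal (|h t| ^ (-s)) := by
    filter_upwards [hzero, ae_restrict_mem hS] with t ht htS
    rw [← ENNReal.ofReal_mul (abs_nonneg _)]
    refine ENNReal.ofReal_le_ofReal ?_
    rw [Real.rpow_neg (abs_nonneg _), ← div_eq_mul_inv, le_div_iff₀ (by positivity)]
    exact hrate t htS
  have himage : h '' S ⊆ Icc (-M) M := by
    rintro _ ⟨t, ht, rfl⟩
    exact abs_le.1 (hbound t ht)
  have key : ENNReal.ofReal a * volume S ≤ ENNReal.ofReal (2 * M ^ (1 - s) / (1 - s)) :=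
    calc ENNReal.ofReal a * volume S
      _ = ∫⁻ _ in S, ENNReal.ofReal a := (setLIntegral_const S _).symm
      _ ≤ ∫⁻ t in S, ENNReal.ofReal |h' t| * ENNReal.ofReal (|h t| ^ (-s)) :=
        lintegral_mono_ae hdensity
      _ = ∫⁻ u in h '' S, ENNReal.ofReal (|u| ^ (-s)) :=
        (lintegral_image_eq_lintegral_abs_deriv_mul hS hd hinj
          fun u => ENNReal.ofReal (|u| ^ (-s))).symm
      _ ≤ ∫⁻ u in Icc (-M) M, ENNReal.ofReal (|u| ^ (-s)) := lintegral_mono_set himage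
      _ = ENNReal.ofReal (2 * M ^ (1 - s) / (1 - s)) := by
        rw [lintegral_Icc_abs_rpow hM (by linarith), neg_add_eq_sub]
  rw [← div_div, ENNReal.ofReal_div_of_pos ha]
  exact ENNReal.le_div_iff_mul_le (by simp [ha]) (by simp) |>.2 (by rwa [mul_comm])

theorem volume_le_of_lojasiewicz_descent {T S : Set ℝ} (hT : Convex ℝ T) (hS : MeasurableSet S)
    (hST : S ⊆ T) {h h' : ℝ → ℝ} (hd : ∀ t ∈ T, HasDerivAt h (h' t) t) (hle : ∀ t ∈ T, h' t ≤ 0)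
    (hlt : ∀ t ∈ S, h' t < 0) {a s M : ℝ} (ha : 0 < a) (hs : s < 1) (hM : 0 ≤ M)
    (hrate : ∀ t ∈ S, h' t ≤ -(a * |h t| ^ s)) (hbound : ∀ t ∈ S, |h t| ≤ M) :
    volume S ≤ ENNReal.ofReal (2 * M ^ (1 - s) / ((1 - s) * a)) := by
  have hanti : AntitoneOn h T := antitoneOn_of_hasDerivWithinAt_nonpos hT
    (fun t ht => (hd t ht).continuousAt.continuousWithinAt)
    (fun t ht => (hd t (interior_subset ht)).hasDerivWithinAt)
    (fun t ht => hle t (interior_subset ht))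
  refine volume_le_of_mul_abs_rpow_le_abs_deriv hS (fun t ht => (hd t (hST ht)).hasDerivWithinAt)
    (injOn_of_antitoneOn_of_hasDerivAt_neg hT.ordConnected hST hanti (fun t ht => hd t (hST ht))
      hlt) ha hs hM (fun t ht => ?_) hbound
  rw [abs_of_neg (hlt t ht)]
  linarith [hrate t ht]

theorem isLittleO_sub_taylor_two {E F : Type*} [NormedAddCommGroup E] [NormedSpace ℝ E]
    [NormedAddCommGroup F] [NormedSpace ℝ F] {f : E → F} {x : E} (hf : Differentiable ℝ f)
    (hf₂ : DifferentiableAt ℝ (fderiv ℝ f) x) :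
    (fun y => f y - f x - fderiv ℝ f x (y - x) -
      (1 / 2 : ℝ) • fderiv ℝ (fderiv ℝ f) x (y - x) (y - x)) =o[𝓝 x] fun y => ‖y - x‖ ^ 2 := by
  set L := fderiv ℝ (fderiv ℝ f) x
  have hsymm : ∀ v w, L v w = L w v :=
    second_derivative_symmetric (fun y => (hf y).hasFDerivAt) hf₂.hasFDerivAt
  -- Since `L` is symmetric, `v ↦ L v v / 2` has derivative `L v`.
  have hderiv : ∀ y, HasFDerivAt
      (fun y => f y - fderiv ℝ f x (y - x) - (1 / 2 : ℝ) • L (y - x) (y - x))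
      (fderiv ℝ f y - fderiv ℝ f x - L (y - x)) y := by
    intro y
    have hsub : HasFDerivAt (fun y => y - x) (ContinuousLinearMap.id ℝ E) y :=
      (hasFDerivAt_id y).sub_const x
    refine (((hf y).hasFDerivAt.sub ((fderiv ℝ f x).hasFDerivAt.comp y hsub)).sub
      (((L.hasFDerivAt.comp y hsub).clm_apply hsub).const_smul (1 / 2 : ℝ))).congr_fderiv ?_
    ext w
    simp only [ContinuousLinearMap.comp_id, Function.comp_apply, map_sub, smul_add,
      _root_.sub_apply, _root_.add_apply, _root_.smul_apply, ContinuousLinearMap.flip_apply,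
      hsymm w, ← add_smul, sub_right_inj]
    norm_num
  have hsmall : (fun y => fderiv ℝ f y - fderiv ℝ f x - L (y - x)) =o[𝓝 x]
      fun y => ‖y - x‖ ^ 1 := by
    simpa using hf₂.hasFDerivAt.isLittleO
  have := (convex_univ.isLittleO_pow_succ (mem_univ x)
    (fun y _ => (hderiv y).hasFDerivWithinAt) (by rwa [nhdsWithin_univ]))
  simpa [sub_right_comm] using this

section Spectral

variable {ι : Type*} [Fintype ι] [DecidableEq ι] {A : Matrix ι ι ℝ}

theorem exists_dotProduct_pow_mulVec_eq_sum (hA : A.IsHermitian) (v : ι → ℝ) :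
    ∃ w : ι → ℝ, ∀ k : ℕ, v ⬝ᵥ (A ^ k) *ᵥ v = ∑ i, hA.eigenvalues i ^ k * w i ^ 2 := by
  set U := (hA.eigenvectorUnitary : Matrix ι ι ℝ)
  have hleft : v ᵥ* U = star U *ᵥ v := by
    rw [star_eq_conjTranspose, conjTranspose_eq_transpose_of_trivial, mulVec_transpose]
  refine ⟨star U *ᵥ v, fun k => ?_⟩
  have hpow : A ^ k = U * diagonal (hA.eigenvalues ^ k) * star U := by
    conv_lhs => rw [hA.spectral_theorem, ← map_pow, Unitary.conjStarAlgAut_apply, diagonal_pow]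
    rfl
  rw [hpow, ← mulVec_mulVec, ← mulVec_mulVec, dotProduct_mulVec, hleft]
  simp only [dotProduct, mulVec_diagonal, Pi.pow_apply]
  exact Finset.sum_congr rfl fun i _ => by ring

theorem exists_dotProduct_mulVec_eq_sum (hA : A.IsHermitian) (v : ι → ℝ) :
    ∃ w : ι → ℝ, v ⬝ᵥ v = ∑ i, w i ^ 2 ∧ v ⬝ᵥ A *ᵥ v = ∑ i, hA.eigenvalues i * w i ^ 2 ∧
      (A *ᵥ v) ⬝ᵥ (A *ᵥ v) = ∑ i, hA.eigenvalues i ^ 2 * w i ^ 2 := by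
  obtain ⟨w, hw⟩ := exists_dotProduct_pow_mulVec_eq_sum hA v
  have hsq : (A *ᵥ v) ⬝ᵥ (A *ᵥ v) = v ⬝ᵥ (A ^ 2) *ᵥ v := by
    rw [pow_two, ← mulVec_mulVec, dotProduct_mulVec v, ← mulVec_transpose,
      ← conjTranspose_eq_transpose_of_trivial, hA.eq]
  exact ⟨w, by simpa using hw 0, by simpa using hw 1, hsq.trans (hw 2)⟩

theorem abs_dotProduct_mulVec_le (hA : A.IsHermitian) {Λ : ℝ}
    (hΛ : ∀ i, |hA.eigenvalues i| ≤ Λ) (v : ι → ℝ) : |v ⬝ᵥ A *ᵥ v| ≤ Λ * (v ⬝ᵥ v) := by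
  obtain ⟨w, hvv, hvAv, -⟩ := exists_dotProduct_mulVec_eq_sum hA v
  rw [hvv, hvAv, Finset.mul_sum]
  refine (Finset.abs_sum_le_sum_abs _ _).trans (Finset.sum_le_sum fun i _ => ?_)
  rw [abs_mul, abs_sq]
  gcongr
  exact hΛ i

theorem mul_abs_dotProduct_mulVec_le (hA : A.IsHermitian) {Λ : ℝ} (hΛ₀ : 0 ≤ Λ)
    (hΛ : ∀ i, Λ ≤ |hA.eigenvalues i|) (v : ι → ℝ) :
    Λ * |v ⬝ᵥ A *ᵥ v| ≤ (A *ᵥ v) ⬝ᵥ (A *ᵥ v) := by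
  obtain ⟨w, -, hvAv, hAvAv⟩ := exists_dotProduct_mulVec_eq_sum hA v
  rw [hvAv, hAvAv]
  calc Λ * |∑ i, hA.eigenvalues i * w i ^ 2|
    _ ≤ Λ * ∑ i, |hA.eigenvalues i| * w i ^ 2 := by
      gcongr
      refine (Finset.abs_sum_le_sum_abs _ _).trans_eq (Finset.sum_congr rfl fun i _ => ?_)
      rw [abs_mul, abs_sq]
    _ = ∑ i, Λ * (|hA.eigenvalues i| * w i ^ 2) := Finset.mul_sum _ _ _
    _ ≤ ∑ i, hA.eigenvalues i ^ 2 * w i ^ 2 := Finset.sum_le_sum fun i _ => by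
      rw [← mul_assoc, ← sq_abs (hA.eigenvalues i), pow_two |hA.eigenvalues i|]
      gcongr
      exact hΛ i

theorem sq_mul_dotProduct_self_le (hA : A.IsHermitian) {Λ : ℝ} (hΛ₀ : 0 ≤ Λ)
    (hΛ : ∀ i, Λ ≤ |hA.eigenvalues i|) (v : ι → ℝ) :
    Λ ^ 2 * (v ⬝ᵥ v) ≤ (A *ᵥ v) ⬝ᵥ (A *ᵥ v) := by
  obtain ⟨w, hvv, -, hAvAv⟩ := exists_dotProduct_mulVec_eq_sum hA v
  rw [hvv, hAvAv, Finset.mul_sum]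
  refine Finset.sum_le_sum fun i _ => ?_
  rw [← sq_abs (hA.eigenvalues i)]
  gcongr
  exact hΛ i

theorem eigenvalues_ne_zero_of_isUnit_det (hA : A.IsHermitian) (hdet : IsUnit A.det) (i : ι) :
    hA.eigenvalues i ≠ 0 := by
  have hprod : ∏ i, hA.eigenvalues i ≠ 0 := hA.det_eq_prod_eigenvalues ▸ hdet.ne_zero
  exact Finset.prod_ne_zero_iff.1 hprod i (Finset.mem_univ i)

end Spectral

section Gradient

theorem apply_eq_dotProduct_apply_single {n : ℕ} (L : (Fin n → ℝ) →L[ℝ] ℝ) (w : Fin n → ℝ) :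
    L w = (fun i => L (Pi.single i 1)) ⬝ᵥ w := by
  conv_lhs => rw [pi_eq_sum_univ' w]
  simp [dotProduct, mul_comm]

theorem fderiv_apply_eq_grad_dotProduct {n : ℕ} (f : (Fin n → ℝ) → ℝ) (y w : Fin n → ℝ) :
    fderiv ℝ f y w = grad f y ⬝ᵥ w :=
  apply_eq_dotProduct_apply_single _ w

variable {n : ℕ} {f : (Fin n → ℝ) → ℝ} {c : Fin n → ℝ}

theorem fderiv_fderiv_apply_single_eq_vecMul_hess (hf₂ : DifferentiableAt ℝ (fderiv ℝ f) c)
    (v : Fin n → ℝ) (j : Fin n) :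
    fderiv ℝ (fderiv ℝ f) c v (Pi.single j 1) = (v ᵥ* hess f c) j :=
  calc fderiv ℝ (fderiv ℝ f) c v (Pi.single j 1)
    _ = fderiv ℝ (fun y => fderiv ℝ f y (Pi.single j 1)) c v := by
      rw [fderiv_clm_apply hf₂ (differentiableAt_const _)]
      simp
    _ = (v ᵥ* hess f c) j := by
      rw [fderiv_apply_eq_grad_dotProduct, dotProduct_comm]
      rfl

theorem fderiv_fderiv_apply_eq_dotProduct_hess_mulVec (hf₂ : DifferentiableAt ℝ (fderiv ℝ f) c)
    (v w : Fin n → ℝ) :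
    fderiv ℝ (fderiv ℝ f) c v w = v ⬝ᵥ hess f c *ᵥ w := by
  rw [apply_eq_dotProduct_apply_single, dotProduct_mulVec]
  simp only [fderiv_fderiv_apply_single_eq_vecMul_hess hf₂]

theorem isLittleO_grad_sub_vecMul_hess (hcrit : fderiv ℝ f c = 0)
    (hf₂ : DifferentiableAt ℝ (fderiv ℝ f) c) :
    (fun y => grad f y - (y - c) ᵥ* hess f c) =o[𝓝 c] fun y => y - c := by
  refine isLittleO_pi.2 fun i => ?_
  have heval := (ContinuousLinearMap.apply ℝ ℝ (Pi.single i (1 : ℝ))).isBigO_comp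
    (fun y => fderiv ℝ f y - fderiv ℝ f c - fderiv ℝ (fderiv ℝ f) c (y - c)) (𝓝 c)
  refine (heval.trans_isLittleO hf₂.hasFDerivAt.isLittleO).congr_left fun y => ?_
  simp only [ContinuousLinearMap.apply_apply, _root_.sub_apply, hcrit, sub_zero,
    fderiv_fderiv_apply_single_eq_vecMul_hess hf₂, Pi.sub_apply, grad]

theorem isLittleO_sub_half_hess (hf : Differentiable ℝ f) (hcrit : fderiv ℝ f c = 0)
    (hf₂ : DifferentiableAt ℝ (fderiv ℝ f) c) :
    (fun y => f y - f c - 1 / 2 * ((y - c) ⬝ᵥ hess f c *ᵥ (y - c))) =o[𝓝 c]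
      fun y => ‖y - c‖ ^ 2 := by
  simpa [hcrit, fderiv_fderiv_apply_eq_dotProduct_hess_mulVec hf₂] using
    isLittleO_sub_taylor_two hf hf₂

theorem isLittleO_grad_dotProduct_self_sub (hcrit : fderiv ℝ f c = 0)
    (hf₂ : DifferentiableAt ℝ (fderiv ℝ f) c) :
    (fun y => grad f y ⬝ᵥ grad f y - ((y - c) ᵥ* hess f c) ⬝ᵥ ((y - c) ᵥ* hess f c)) =o[𝓝 c]
      fun y => ‖y - c‖ ^ 2 := by
  have hdiff := isLittleO_grad_sub_vecMul_hess hcrit hf₂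
  have hlin : (fun y => (y - c) ᵥ* hess f c) =O[𝓝 c] fun y => y - c :=
    (LinearMap.toContinuousLinearMap (hess f c).vecMulLinear).isBigO_sub _ _ |>.congr_left
      fun y => by simp [sub_vecMul]
  have hsum : (fun y => grad f y + (y - c) ᵥ* hess f c) =O[𝓝 c] fun y => y - c :=
    (hdiff.isBigO.add (hlin.add hlin)).congr_left fun y => by abel
  have hprod := IsLittleO.sum (s := Finset.univ) fun i _ =>
    (isLittleO_pi.1 hdiff i).norm_right.mul_isBigO (isBigO_pi.1 hsum i).norm_right
  refine (hprod.congr_left fun y => ?_).congr_right fun y => (sq _).symm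
  simp only [Finset.sum_apply, dotProduct, Pi.sub_apply, Pi.add_apply, ← Finset.sum_sub_distrib]
  exact Finset.sum_congr rfl fun i _ => by ring

end Gradient

theorem norm_le_sqrt_dotProduct_self {ι : Type*} [Fintype ι] (v : ι → ℝ) :
    ‖v‖ ≤ √(v ⬝ᵥ v) := by
  refine (pi_norm_le_iff_of_nonneg (Real.sqrt_nonneg _)).2 fun i => Real.le_sqrt_of_sq_le ?_
  rw [Real.norm_eq_abs, sq_abs, sq]
  exact Finset.single_le_sum (f := fun i => v i * v i) (fun j _ => mul_self_nonneg _)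
    (Finset.mem_univ i)

theorem norm_sq_le_dotProduct_self {ι : Type*} [Fintype ι] (v : ι → ℝ) : ‖v‖ ^ 2 ≤ v ⬝ᵥ v :=
  (Real.le_sqrt (norm_nonneg v) (dotProduct_star_self_nonneg v)).1 (norm_le_sqrt_dotProduct_self v)

section Nondegenerate

variable {n : ℕ} {f : (Fin n → ℝ) → ℝ} {c : Fin n → ℝ}

theorem eventually_abs_sub_le (hf : Differentiable ℝ f) (hcrit : fderiv ℝ f c = 0)
    (hf₂ : DifferentiableAt ℝ (fderiv ℝ f) c) (hH : (hess f c).IsHermitian) {Λ : ℝ} (hΛ₀ : 0 < Λ)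
    (hΛ : ∀ i, |hH.eigenvalues i| ≤ Λ) :
    ∀ᶠ y in 𝓝 c, |f y - f c| ≤ Λ * ((y - c) ⬝ᵥ (y - c)) := by
  filter_upwards [(isLittleO_sub_half_hess hf hcrit hf₂).def (half_pos hΛ₀)] with y hy
  rw [Real.norm_eq_abs, norm_pow, norm_norm] at hy
  have hquad := abs_le.1 (abs_dotProduct_mulVec_le hH hΛ (y - c))
  have hnorm := mul_le_mul_of_nonneg_left (norm_sq_le_dotProduct_self (y - c)) hΛ₀.le
  have hrem := abs_le.1 hy
  exact abs_le.2 ⟨by linarith, by linarith⟩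

theorem eventually_le_grad_dotProduct_self (hcrit : fderiv ℝ f c = 0)
    (hf₂ : DifferentiableAt ℝ (fderiv ℝ f) c) (hH : (hess f c).IsHermitian) {ε : ℝ} (hε : 0 < ε) :
    ∀ᶠ y in 𝓝 c, (hess f c *ᵥ (y - c)) ⬝ᵥ (hess f c *ᵥ (y - c)) - ε * ((y - c) ⬝ᵥ (y - c)) ≤
      grad f y ⬝ᵥ grad f y := by
  have hvecMul : ∀ v, v ᵥ* hess f c = hess f c *ᵥ v := fun v => by
    rw [← mulVec_transpose, ← conjTranspose_eq_transpose_of_trivial, hH.eq]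
  filter_upwards [(isLittleO_grad_dotProduct_self_sub hcrit hf₂).def hε] with y hy
  rw [Real.norm_eq_abs, norm_pow, norm_norm, hvecMul] at hy
  have hnorm := mul_le_mul_of_nonneg_left (norm_sq_le_dotProduct_self (y - c)) hε.le
  linarith [(abs_le.1 hy).1]

theorem eventually_grad_ne_zero (hcrit : fderiv ℝ f c = 0)
    (hf₂ : DifferentiableAt ℝ (fderiv ℝ f) c) (hH : (hess f c).IsHermitian) {Λ : ℝ} (hΛ₀ : 0 < Λ)
    (hΛ : ∀ i, Λ ≤ |hH.eigenvalues i|) : ∀ᶠ y in 𝓝 c, y ≠ c → grad f y ≠ 0 := by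
  have hε : 0 < Λ ^ 2 / 2 := by positivity
  filter_upwards [eventually_le_grad_dotProduct_self hcrit hf₂ hH hε] with y hy hyc hgrad
  have hpos : 0 < (y - c) ⬝ᵥ (y - c) := dotProduct_star_self_pos_iff.2 (sub_ne_zero.2 hyc)
  have hhess := sq_mul_dotProduct_self_le hH hΛ₀.le hΛ (y - c)
  rw [hgrad, dotProduct_zero] at hy
  nlinarith

theorem eventually_mul_abs_sub_le_grad_dotProduct_self (hf : Differentiable ℝ f)
    (hcrit : fderiv ℝ f c = 0) (hf₂ : DifferentiableAt ℝ (fderiv ℝ f) c)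
    (hH : (hess f c).IsHermitian) {Λ : ℝ} (hΛ₀ : 0 < Λ) (hΛ : ∀ i, Λ ≤ |hH.eigenvalues i|) :
    ∀ᶠ y in 𝓝 c, Λ * |f y - f c| ≤ grad f y ⬝ᵥ grad f y := by
  have hε : 0 < Λ ^ 2 / 4 := by positivity
  have hε' : 0 < Λ / 4 := by positivity
  filter_upwards [eventually_le_grad_dotProduct_self hcrit hf₂ hH hε,
    (isLittleO_sub_half_hess hf hcrit hf₂).def hε'] with y hgrad hrem
  rw [Real.norm_eq_abs, norm_pow, norm_norm] at hrem
  set v := y - c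
  have htaylor : |f y - f c| ≤ 1 / 2 * |v ⬝ᵥ hess f c *ᵥ v| + Λ / 4 * (v ⬝ᵥ v) :=
    calc |f y - f c|
      _ ≤ |1 / 2 * (v ⬝ᵥ hess f c *ᵥ v)| + |f y - f c - 1 / 2 * (v ⬝ᵥ hess f c *ᵥ v)| := by
        simpa using abs_add_le (1 / 2 * (v ⬝ᵥ hess f c *ᵥ v))
          (f y - f c - 1 / 2 * (v ⬝ᵥ hess f c *ᵥ v))
      _ ≤ 1 / 2 * |v ⬝ᵥ hess f c *ᵥ v| + Λ / 4 * (v ⬝ᵥ v) := by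
        rw [abs_mul, abs_of_pos (by norm_num : (0 : ℝ) < 1 / 2)]
        gcongr
        exact hrem.trans (by gcongr; exact norm_sq_le_dotProduct_self v)
  calc Λ * |f y - f c|
    _ ≤ 1 / 2 * (Λ * |v ⬝ᵥ hess f c *ᵥ v|) + 1 / 4 * (Λ ^ 2 * (v ⬝ᵥ v)) := by
      linarith [mul_le_mul_of_nonneg_left htaylor hΛ₀.le]
    _ ≤ (hess f c *ᵥ v) ⬝ᵥ (hess f c *ᵥ v) - Λ ^ 2 / 4 * (v ⬝ᵥ v) := by
      linarith [mul_abs_dotProduct_mulVec_le hH hΛ₀.le hΛ v,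
        sq_mul_dotProduct_self_le hH hΛ₀.le hΛ v]
    _ ≤ grad f y ⬝ᵥ grad f y := hgrad

end Nondegenerate

section Flow

/-- The vector field `-sign(∇ᵢf) φ(|∇ᵢf|)` of a coordinatewise rescaled gradient flow of `f`.
Gradient descent is `φ s = s`. -/
noncomputable def signedGradientField {n : ℕ} (φ : ℝ → ℝ) (f : (Fin n → ℝ) → ℝ)
    (y : Fin n → ℝ) : Fin n → ℝ :=
  fun i => -(Real.sign (grad f y i) * φ |grad f y i|)

/-- Forward solutions of the flow of `signedGradientField φ f`. At `t = 0` the derivative is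
two-sided, so `x` is implicitly defined slightly before time `0`. -/
def IsSignedGradientFlow {n : ℕ} (φ : ℝ → ℝ) (f : (Fin n → ℝ) → ℝ) (x : ℝ → Fin n → ℝ) : Prop :=
  ∀ t, 0 ≤ t → HasDerivAt x (signedGradientField φ f (x t)) t

theorem sign_mul_self_eq_abs (s : ℝ) : Real.sign s * s = |s| := by
  rcases lt_trichotomy s 0 with hs | rfl | hs
  · rw [Real.sign_of_neg hs, abs_of_neg hs, neg_one_mul]
  · simp
  · rw [Real.sign_of_pos hs, abs_of_pos hs, one_mul]

variable {n : ℕ} {φ : ℝ → ℝ} {f : (Fin n → ℝ) → ℝ} {ρ : ℝ}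

theorem fderiv_signedGradientField_le (hρ : -1 < ρ) (hρ1 : ρ ≤ 1) (hφ : ∀ s, 0 < s → s ^ ρ ≤ φ s)
    (y : Fin n → ℝ) :
    fderiv ℝ f y (signedGradientField φ f y) ≤ -(grad f y ⬝ᵥ grad f y) ^ ((1 + ρ) / 2) := by
  have hcoord : ∀ s : ℝ, (s * s) ^ ((1 + ρ) / 2) ≤ |s| * φ |s| := by
    intro s
    rcases eq_or_ne s 0 with rfl | hs
    · simp [Real.zero_rpow (show (1 + ρ) / 2 ≠ 0 by linarith)]
    have hs' : 0 < |s| := abs_pos.2 hs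
    calc (s * s) ^ ((1 + ρ) / 2)
      _ = |s| * |s| ^ ρ := by
        rw [← abs_mul_abs_self, ← pow_two, ← Real.rpow_natCast, ← Real.rpow_mul hs'.le,
          ← Real.rpow_one_add' hs'.le (by linarith)]
        congr 1
        push_cast
        ring
      _ ≤ |s| * φ |s| := by gcongr; exact hφ _ hs'
  rw [le_neg]
  calc (grad f y ⬝ᵥ grad f y) ^ ((1 + ρ) / 2)
    _ ≤ ∑ i, (grad f y i * grad f y i) ^ ((1 + ρ) / 2) :=
      rpow_sum_le_sum_rpow_s14 _ (fun i _ => mul_self_nonneg _) (by linarith) (by linarith)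
    _ ≤ ∑ i, |grad f y i| * φ |grad f y i| := Finset.sum_le_sum fun i _ => hcoord _
    _ = -fderiv ℝ f y (signedGradientField φ f y) := by
      rw [fderiv_apply_eq_grad_dotProduct, dotProduct, ← Finset.sum_neg_distrib]
      refine Finset.sum_congr rfl fun i _ => ?_
      rw [signedGradientField, mul_neg, neg_neg, ← mul_assoc, mul_comm (grad f y i),
        sign_mul_self_eq_abs]

theorem IsSignedGradientFlow.hasDerivAt_comp {x : ℝ → Fin n → ℝ} (hx : IsSignedGradientFlow φ f x)
    (hf : Differentiable ℝ f) {t : ℝ} (ht : 0 ≤ t) :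
    HasDerivAt (fun t => f (x t)) (fderiv ℝ f (x t) (signedGradientField φ f (x t))) t :=
  (hf (x t)).hasFDerivAt.comp_hasDerivAt t (hx t ht)

theorem IsSignedGradientFlow.measurableSet_sojourn {x : ℝ → Fin n → ℝ}
    (hx : IsSignedGradientFlow φ f x) {U : Set (Fin n → ℝ)} (hU : IsOpen U) :
    MeasurableSet {t | 0 ≤ t ∧ x t ∈ U} := by
  have hcont : ContinuousOn x (Ici 0) := fun t ht => (hx t ht).continuousAt.continuousWithinAt
  obtain ⟨V, hV, hVU⟩ := continuousOn_iff'.1 hcont U hU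
  have : {t | 0 ≤ t ∧ x t ∈ U} = V ∩ Ici 0 := by
    rw [← hVU, inter_comm]
    rfl
  exact this ▸ hV.measurableSet.inter measurableSet_Ici

theorem IsSignedGradientFlow.volume_sojourn_le {x : ℝ → Fin n → ℝ}
    (hx : IsSignedGradientFlow φ f x) (hf : Differentiable ℝ f) (hρ : -1 < ρ) (hρ1 : ρ < 1)
    (hφ : ∀ s, 0 < s → s ^ ρ ≤ φ s) {U : Set (Fin n → ℝ)} (hU : IsOpen U) {b l M : ℝ}
    (hb : 0 < b) (hM : 0 ≤ M) (hgrad : ∀ y ∈ U, grad f y ≠ 0) (hbound : ∀ y ∈ U, |f y - l| ≤ M)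
    (hPL : ∀ y ∈ U, b * |f y - l| ≤ grad f y ⬝ᵥ grad f y) :
    volume {t | 0 ≤ t ∧ x t ∈ U} ≤
      ENNReal.ofReal (4 / (1 - ρ) * (M ^ ((1 - ρ) / 2) / b ^ ((1 + ρ) / 2))) := by
  have hdecay : ∀ t, fderiv ℝ f (x t) (signedGradientField φ f (x t)) ≤
      -(grad f (x t) ⬝ᵥ grad f (x t)) ^ ((1 + ρ) / 2) :=
    fun t => fderiv_signedGradientField_le hρ hρ1.le hφ (x t)
  have hnonneg : ∀ y, 0 ≤ grad f y ⬝ᵥ grad f y := fun y => dotProduct_star_self_nonneg _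
  have hvol := volume_le_of_lojasiewicz_descent (convex_Ici 0) (hx.measurableSet_sojourn hU)
    (fun t ht => ht.1) (fun t ht => (hx.hasDerivAt_comp hf ht).sub_const l)
    (fun t _ => (hdecay t).trans (neg_nonpos.2 (Real.rpow_nonneg (hnonneg _) _)))
    (fun t ht => (hdecay t).trans_lt <| neg_lt_zero.2 <|
      Real.rpow_pos_of_pos (dotProduct_star_self_pos_iff.2 (hgrad _ ht.2)) _)
    (a := b ^ ((1 + ρ) / 2)) (s := (1 + ρ) / 2) (by positivity) (by linarith) hM
    (fun t ht => (hdecay t).trans <| neg_le_neg <| by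
      rw [← Real.mul_rpow hb.le (abs_nonneg _)]
      exact Real.rpow_le_rpow (by positivity) (hPL _ ht.2) (by linarith))
    (fun t ht => hbound _ ht.2)
  convert hvol using 2
  have : 1 - ρ ≠ 0 := by linarith
  rw [show 1 - (1 + ρ) / 2 = (1 - ρ) / 2 by ring]
  field_simp
  norm_num

end Flow

section Evasion

/-- The Euclidean ball of radius `r` without its centre `c`. The ambient `Fin n → ℝ` carries the
supremum norm, so `Metric.ball` is not available. -/
def puncturedEuclideanBall {n : ℕ} (c : Fin n → ℝ) (r : ℝ) : Set (Fin n → ℝ) :=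
  {y | √((y - c) ⬝ᵥ (y - c)) < r ∧ y ≠ c}

variable {n : ℕ} {f : (Fin n → ℝ) → ℝ} {c : Fin n → ℝ} {Λmax Λmin : ℝ}

theorem isOpen_puncturedEuclideanBall (c : Fin n → ℝ) (r : ℝ) :
    IsOpen (puncturedEuclideanBall c r) := by
  have hnorm : Continuous fun y : Fin n → ℝ => √((y - c) ⬝ᵥ (y - c)) :=
    Real.continuous_sqrt.comp ((continuous_sub_right c).dotProduct (continuous_sub_right c))
  exact (isOpen_lt hnorm continuous_const).inter isOpen_ne

theorem dotProduct_self_le_of_mem_puncturedEuclideanBall {y : Fin n → ℝ} {r : ℝ}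
    (hy : y ∈ puncturedEuclideanBall c r) : (y - c) ⬝ᵥ (y - c) ≤ r ^ 2 :=
  (Real.sqrt_le_left ((Real.sqrt_nonneg _).trans hy.1.le)).1 hy.1.le

theorem eventually_forall_mem_puncturedEuclideanBall {P : (Fin n → ℝ) → Prop}
    (hP : ∀ᶠ y in 𝓝 c, P y) : ∀ᶠ r in 𝓝[>] (0 : ℝ), ∀ y ∈ puncturedEuclideanBall c r, P y := by
  obtain ⟨ε, hε, hball⟩ := Metric.eventually_nhds_iff.1 hP
  filter_upwards [Ioo_mem_nhdsGT hε] with r hr y hy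
  refine hball ?_
  rw [dist_eq_norm]
  exact (norm_le_sqrt_dotProduct_self _).trans_lt (hy.1.trans hr.2)

theorem eventually_forall_volume_sojourn_puncturedEuclideanBall_le {φ : ℝ → ℝ} {ρ : ℝ}
    (hρ : -1 < ρ) (hρ1 : ρ < 1) (hφ : ∀ s, 0 < s → s ^ ρ ≤ φ s) (hf : Differentiable ℝ f)
    (hcrit : fderiv ℝ f c = 0) (hf₂ : DifferentiableAt ℝ (fderiv ℝ f) c)
    (hH : (hess f c).IsHermitian) (hΛmin : 0 < Λmin) (hΛmax : 0 < Λmax)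
    (hmin : ∀ i, Λmin ≤ |hH.eigenvalues i|) (hmax : ∀ i, |hH.eigenvalues i| ≤ Λmax) :
    ∀ᶠ r in 𝓝[>] (0 : ℝ), ∀ x, IsSignedGradientFlow φ f x →
      volume {t | 0 ≤ t ∧ x t ∈ puncturedEuclideanBall c r} ≤ ENNReal.ofReal
        (4 / (1 - ρ) * (Λmax ^ ((1 - ρ) / 2) / Λmin ^ ((1 + ρ) / 2)) * r ^ (1 - ρ)) := by
  filter_upwards [self_mem_nhdsWithin,
    eventually_forall_mem_puncturedEuclideanBall (eventually_grad_ne_zero hcrit hf₂ hH hΛmin hmin),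
    eventually_forall_mem_puncturedEuclideanBall
      (eventually_abs_sub_le hf hcrit hf₂ hH hΛmax hmax),
    eventually_forall_mem_puncturedEuclideanBall
      (eventually_mul_abs_sub_le_grad_dotProduct_self hf hcrit hf₂ hH hΛmin hmin)]
    with r hr hgrad hbound hPL x hx
  have hr₀ : 0 < r := hr
  have hradius : (Λmax * r ^ 2) ^ ((1 - ρ) / 2) = Λmax ^ ((1 - ρ) / 2) * r ^ (1 - ρ) := by
    rw [Real.mul_rpow hΛmax.le (sq_nonneg r), ← Real.rpow_natCast, ← Real.rpow_mul hr₀.le]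
    push_cast
    rw [mul_div_cancel₀ _ two_ne_zero]
  have hvol := hx.volume_sojourn_le hf hρ hρ1 hφ (isOpen_puncturedEuclideanBall c r)
    (M := Λmax * r ^ 2) hΛmin (by positivity) (fun y hy => hgrad y hy hy.2)
    (fun y hy => (hbound y hy).trans <| mul_le_mul_of_nonneg_left
      (dotProduct_self_le_of_mem_puncturedEuclideanBall hy) hΛmax.le) hPL
  rwa [hradius, mul_div_right_comm, ← mul_assoc] at hvol

end Evasion

section GenFlow

/-- The speed `s ↦ s^{1/(p-1)} + s^{1/(q-1)}` of the GenFlow dynamics. -/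
noncomputable def genFlowSpeed (p q s : ℝ) : ℝ :=
  s ^ (1 / (p - 1)) + s ^ (1 / (q - 1))

/-- The member with parameter `m` (to be `p` or `q`) of the minimum in the evasion bound. -/
noncomputable def evasionBound (n : ℕ) (k₁ k₂ Λmax Λmin m r : ℝ) : ℝ :=
  (n : ℝ) ^ (1 / (m - 1)) * (8 * k₁ / k₂ ^ (m / (m - 1))) *
    (Λmax ^ ((m - 2) / (2 * (m - 1))) / Λmin ^ (m / (2 * (m - 1)))) * r ^ ((m - 2) / (m - 1))

theorem rpow_le_genFlowSpeed_max (p q : ℝ) {s : ℝ} (hs : 0 < s) :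
    s ^ (1 / (max p q - 1)) ≤ genFlowSpeed p q s := by
  have hp : 0 ≤ s ^ (1 / (p - 1)) := by positivity
  have hq : 0 ≤ s ^ (1 / (q - 1)) := by positivity
  rcases max_choice p q with h | h <;> rw [h, genFlowSpeed] <;> linarith

variable {n : ℕ} {k₁ k₂ Λmax Λmin : ℝ}

theorem le_evasionBound {m r : ℝ} (hn : 1 ≤ n) (hm : 2 < m) (hΛmax : 0 ≤ Λmax) (hΛmin : 0 ≤ Λmin)
    (hr : 0 ≤ r) (hk₁ : (m - 1) / (2 * (m - 2)) ≤ k₁) (hk₂ : 0 < k₂) (hk₂' : k₂ ≤ 1) :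
    4 / (1 - 1 / (m - 1)) *
      (Λmax ^ ((1 - 1 / (m - 1)) / 2) / Λmin ^ ((1 + 1 / (m - 1)) / 2)) *
      r ^ (1 - 1 / (m - 1)) ≤ evasionBound n k₁ k₂ Λmax Λmin m r := by
  have hm₁ : 0 < m - 1 := by linarith
  have hm₂ : 0 < m - 2 := by linarith
  have hexp : 1 - 1 / (m - 1) = (m - 2) / (m - 1) := by field_simp; ring
  have hexpmax : (1 - 1 / (m - 1)) / 2 = (m - 2) / (2 * (m - 1)) := by field_simp; ring
  have hexpmin : (1 + 1 / (m - 1)) / 2 = m / (2 * (m - 1)) := by field_simp; ring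
  have hk₁₀ : 0 ≤ k₁ := le_trans (by positivity) hk₁
  have hn' : 1 ≤ (n : ℝ) ^ (1 / (m - 1)) :=
    Real.one_le_rpow (by exact_mod_cast hn) (by positivity)
  have hk₂pow : k₂ ^ (m / (m - 1)) ≤ 1 :=
    Real.rpow_le_one hk₂.le hk₂' (div_nonneg (by linarith) hm₁.le)
  have hfactor : 4 / (1 - 1 / (m - 1)) ≤
      (n : ℝ) ^ (1 / (m - 1)) * (8 * k₁ / k₂ ^ (m / (m - 1))) :=
    calc 4 / (1 - 1 / (m - 1))
      _ = 8 * ((m - 1) / (2 * (m - 2))) := by rw [hexp]; field_simp; norm_num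
      _ ≤ 8 * k₁ := by gcongr
      _ ≤ 8 * k₁ / k₂ ^ (m / (m - 1)) := le_div_self (by positivity) (by positivity) hk₂pow
      _ ≤ (n : ℝ) ^ (1 / (m - 1)) * (8 * k₁ / k₂ ^ (m / (m - 1))) :=
        le_mul_of_one_le_left (by positivity) hn'
  rw [evasionBound, ← hexpmax, ← hexpmin, ← hexp]
  gcongr

theorem eventually_mul_rpow_le_mul_rpow {a b : ℝ} (hab : a < b) (A : ℝ) {B : ℝ} (hB : 0 < B) :
    ∀ᶠ r in 𝓝[>] (0 : ℝ), A * r ^ b ≤ B * r ^ a := by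
  have hlim : Tendsto (fun r : ℝ => A * r ^ (b - a)) (𝓝[>] 0) (𝓝 0) := by
    have := (Real.continuousAt_rpow_const 0 (b - a) (Or.inr (sub_pos.2 hab).le)).tendsto.const_mul A
    rw [Real.zero_rpow (sub_pos.2 hab).ne', mul_zero] at this
    exact this.mono_left nhdsWithin_le_nhds
  filter_upwards [hlim.eventually_le_const hB, self_mem_nhdsWithin] with r hr hr₀
  calc A * r ^ b
    _ = A * r ^ (b - a) * r ^ a := by rw [mul_assoc, ← Real.rpow_add hr₀, sub_add_cancel]
    _ ≤ B * r ^ a := mul_le_mul_of_nonneg_right hr (Real.rpow_nonneg (le_of_lt hr₀) _)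

theorem eventually_evasionBound_le_evasionBound (hn : 1 ≤ n) (hk₁ : 0 < k₁) (hk₂ : 0 < k₂)
    (hΛmax : 0 < Λmax) (hΛmin : 0 < Λmin) {l m : ℝ} (hl : 1 < l) (hlm : l ≤ m) :
    ∀ᶠ r in 𝓝[>] (0 : ℝ),
      evasionBound n k₁ k₂ Λmax Λmin m r ≤ evasionBound n k₁ k₂ Λmax Λmin l r := by
  rcases hlm.eq_or_lt with rfl | hlm
  · exact Eventually.of_forall fun _ => le_rfl
  have : (0 : ℝ) < n := by exact_mod_cast hn
  refine eventually_mul_rpow_le_mul_rpow ?_ _ (by positivity)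
  rw [div_lt_div_iff₀ (by linarith) (by linarith)]
  linarith

theorem eventually_forall_volume_sojourn_le_min_evasionBound {p q : ℝ} (hp : 1 < p) (hq : 1 < q)
    (hm : 2 < max p q) (hk₁ : (max p q - 1) / (2 * (max p q - 2)) ≤ k₁) (hk₂ : 0 < k₂)
    (hk₂' : k₂ ≤ 1) {f : (Fin n → ℝ) → ℝ} {c : Fin n → ℝ} (hf : Differentiable ℝ f)
    (hcrit : fderiv ℝ f c = 0) (hf₂ : DifferentiableAt ℝ (fderiv ℝ f) c)
    (hH : (hess f c).IsHermitian) (hn : 1 ≤ n) (hΛmin : 0 < Λmin) (hΛmax : 0 < Λmax)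
    (hmin : ∀ i, Λmin ≤ |hH.eigenvalues i|) (hmax : ∀ i, |hH.eigenvalues i| ≤ Λmax) :
    ∀ᶠ r in 𝓝[>] (0 : ℝ), ∀ x, IsSignedGradientFlow (genFlowSpeed p q) f x →
      volume {t | 0 ≤ t ∧ x t ∈ puncturedEuclideanBall c r} ≤ ENNReal.ofReal
        (min (evasionBound n k₁ k₂ Λmax Λmin p r) (evasionBound n k₁ k₂ Λmax Λmin q r)) := by
  have hm₁ : 0 < max p q - 1 := by linarith
  have hk₁₀ : 0 < k₁ := (div_pos hm₁ (by linarith)).trans_le hk₁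
  have hρ : 0 < 1 / (max p q - 1) := by positivity
  have hρ₁ : 1 / (max p q - 1) < 1 := (div_lt_one hm₁).2 (by linarith)
  filter_upwards [self_mem_nhdsWithin,
    eventually_evasionBound_le_evasionBound hn hk₁₀ hk₂ hΛmax hΛmin hp (le_max_left p q),
    eventually_evasionBound_le_evasionBound hn hk₁₀ hk₂ hΛmax hΛmin hq (le_max_right p q),
    eventually_forall_volume_sojourn_puncturedEuclideanBall_le (by linarith) hρ₁
      (fun s => rpow_le_genFlowSpeed_max p q) hf hcrit hf₂ hH hΛmin hΛmax hmin hmax]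
    with r hr hle_p hle_q hvol x hx
  have hbound := le_evasionBound hn hm hΛmax.le hΛmin.le (le_of_lt hr) hk₁ hk₂ hk₂'
  exact (hvol x hx).trans <| ENNReal.ofReal_le_ofReal <|
    le_min (hbound.trans hle_p) (hbound.trans hle_q)

theorem genFlow_fast_saddle_evasion_general {p q : ℝ} (hp : 2 < p) (hq : 1 < q) :
    ∃ k₁ k₂ : ℝ, 1 / 2 < k₁ ∧ 0 < k₂ ∧ k₂ < 1 ∧
      ∀ {n : ℕ} {f : (Fin n → ℝ) → ℝ} {c : Fin n → ℝ}, Differentiable ℝ f → fderiv ℝ f c = 0 →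
        DifferentiableAt ℝ (fderiv ℝ f) c → ∀ hH : (hess f c).IsHermitian,
        IsUnit (hess f c).det → ∀ {Λmax Λmin : ℝ},
        IsGreatest (range fun i => |hH.eigenvalues i|) Λmax →
        IsLeast (range fun i => |hH.eigenvalues i|) Λmin →
        ∃ r₀ : ℝ, 0 < r₀ ∧ ∀ x, IsSignedGradientFlow (genFlowSpeed p q) f x →
          ∀ r, 0 < r → r < r₀ →
          volume {t | 0 ≤ t ∧ x t ∈ puncturedEuclideanBall c r} ≤ ENNReal.ofReal
            (min (evasionBound n k₁ k₂ Λmax Λmin p r) (evasionBound n k₁ k₂ Λmax Λmin q r)) := by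
  have hm : 2 < max p q := hp.trans_le (le_max_left p q)
  have hk₁ : 1 / 2 < (max p q - 1) / (2 * (max p q - 2)) := by
    rw [div_lt_div_iff₀ two_pos (by linarith)]
    linarith
  refine ⟨(max p q - 1) / (2 * (max p q - 2)), 1 / 2, hk₁, one_half_pos, one_half_lt_one, ?_⟩
  intro n f c hf hcrit hf₂ hH hnd Λmax Λmin hmax hmin
  obtain ⟨i, hi⟩ := hmin.1
  have hΛmin : 0 < Λmin := hi ▸ abs_pos.2 (eigenvalues_ne_zero_of_isUnit_det hH hnd i)
  have hΛmax : 0 < Λmax := hΛmin.trans_le (hmax.2 hmin.1)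
  obtain ⟨r₀, hr₀, hvol⟩ := mem_nhdsGT_iff_exists_Ioo_subset.1 <|
    eventually_forall_volume_sojourn_le_min_evasionBound (one_lt_two.trans hp) hq hm le_rfl
      one_half_pos one_half_lt_one.le hf hcrit hf₂ hH i.pos hΛmin hΛmax
      (fun i => hmin.2 (mem_range_self i)) (fun i => hmax.2 (mem_range_self i))
  exact ⟨r₀, hr₀, fun x hx r hr hr' => hvol ⟨hr, hr'⟩ x hx⟩

end GenFlow

/-- **Fast evasion of saddle points (Theorem 3).** Let `x*` be a non-degenerate saddle
point of a `C²` function `f`, with `Λ_max`, `Λ_min` the extreme absolute eigenvalues of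
the Hessian `H = D²f(x*)`. Then along any GenFlow solution not converging to `x*`,
there are constants `k₁ > 1/2`, `k₂ ∈ (0,1)` such that for all sufficiently small
`r > 0`, the Lebesgue measure of the set of times spent in `B_r(x*) \ {x*}` is at most
`min{ n^{1/(p-1)} (8k₁/k₂^{p/(p-1)}) Λmax^{(p-2)/(2(p-1))}/Λmin^{p/(2(p-1))} r^{(p-2)/(p-1)},`
`     n^{1/(q-1)} (8k₁/k₂^{q/(q-1)}) Λmax^{(q-2)/(2(q-1))}/Λmin^{q/(2(q-1))} r^{(q-2)/(q-1)} }`. -/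
theorem genFlow_fast_saddle_evasion
    {n : ℕ} (f : (Fin n → ℝ) → ℝ) (hf : ContDiff ℝ 2 f)
    (xstar : Fin n → ℝ)
    (hcrit : fderiv ℝ f xstar = 0)
    (hH : (hess f xstar).IsHermitian)
    (hnd : IsUnit (hess f xstar).det)
    (Λmax Λmin : ℝ)
    (hmax : IsGreatest (Set.range fun i => |hH.eigenvalues i|) Λmax)
    (hmin : IsLeast (Set.range fun i => |hH.eigenvalues i|) Λmin)
    (p q : ℝ) (hp : 2 < p) (hq : q ∈ Set.Ioo (1 : ℝ) 2)
    (x : ℝ → (Fin n → ℝ))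
    (hx : ∀ t : ℝ, 0 ≤ t → ∀ i, HasDerivAt (fun s => x s i)
      (-(Real.sign (grad f (x t) i) *
          (|grad f (x t) i| ^ (1 / (p - 1)) + |grad f (x t) i| ^ (1 / (q - 1))))) t)
    (hnoconv : ¬ Filter.Tendsto x Filter.atTop (nhds xstar)) :
    ∃ k₁ k₂ : ℝ, 1 / 2 < k₁ ∧ 0 < k₂ ∧ k₂ < 1 ∧
      ∃ r₀ : ℝ, 0 < r₀ ∧ ∀ r : ℝ, 0 < r → r < r₀ →
        volume {t : ℝ | 0 ≤ t ∧
            Real.sqrt ((x t - xstar) ⬝ᵥ (x t - xstar)) < r ∧ x t ≠ xstar} ≤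
          ENNReal.ofReal (min
            ((n : ℝ) ^ (1 / (p - 1)) * (8 * k₁ / k₂ ^ (p / (p - 1))) *
              (Λmax ^ ((p - 2) / (2 * (p - 1))) / Λmin ^ (p / (2 * (p - 1)))) *
              r ^ ((p - 2) / (p - 1)))
            ((n : ℝ) ^ (1 / (q - 1)) * (8 * k₁ / k₂ ^ (q / (q - 1))) *
              (Λmax ^ ((q - 2) / (2 * (q - 1))) / Λmin ^ (q / (2 * (q - 1)))) *
              r ^ ((q - 2) / (q - 1)))) := by
  obtain ⟨k₁, k₂, hk₁, hk₂, hk₂', hgen⟩ := genFlow_fast_saddle_evasion_general hp hq.1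
  obtain ⟨r₀, hr₀, hvol⟩ := hgen (hf.differentiable two_ne_zero) hcrit
    ((hf.fderiv_right le_rfl).differentiable one_ne_zero xstar) hH hnd hmax hmin
  exact ⟨k₁, k₂, hk₁, hk₂, hk₂', r₀, hr₀, hvol x fun t ht => hasDerivAt_pi.2 (hx t ht)⟩
end

section
/- Let g : ℝⁿ × ℝᵐ → ℝ be twice continuously differentiable with ∇²ₓₓ g(x,y) ⪰ μ₁ I_n and ∇²ᵧᵧ g(x,y) ⪯ −μ₂ I_m for all (x,y), where μ₁, μ₂ > 0, and let (x*, y*) be the unique point with ∇g(x*, y*) = 0. Fix p > 2, q ∈ (1,2), and define ∇G(x,y) = (∇ₓg(x,y), −∇ᵧg(x,y)) ∈ ℝⁿ⁺ᵐ. Let (x, y) : [0,∞) → ℝⁿ × ℝᵐ be a differentiable trajectory such that at every t with ∇G(x(t),y(t)) ≠ 0, ẋ(t) = −∇ₓg(x(t),y(t)) · ( ‖∇G(x(t),y(t))‖^{−(p−2)/(p−1)} + ‖∇G(x(t),y(t))‖^{−(q−2)/(q−1)} ) and ẏ(t) = ∇ᵧg(x(t),y(t)) · ( ‖∇G(x(t),y(t))‖^{−(p−2)/(p−1)}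 + ‖∇G(x(t),y(t))‖^{−(q−2)/(q−1)} ), and ẋ(t) = 0, ẏ(t) = 0 whenever ∇G(x(t),y(t)) = 0. Then (x(t), y(t)) = (x*, y*) for all t ≥ T̄, where T̄ = 1/(a(1−γ₁)) + 1/(b(γ₂−1)) with γ₁ = p/(2(p−1)), γ₂ = q/(2(q−1)), a = min(μ₁,μ₂)·2^{γ₁}, and b = min(μ₁,μ₂)·2^{γ₂}. -/
/-- Partial gradient of `g(x,y)` in `x`. -/
noncomputable def gradx {n m : ℕ} (g : (Fin n → ℝ) → (Fin m → ℝ) → ℝ)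
    (x : Fin n → ℝ) (y : Fin m → ℝ) : Fin n → ℝ :=
  fun i => fderiv ℝ (fun x' => g x' y) x (Pi.single i 1)

/-- Partial gradient of `g(x,y)` in `y`. -/
noncomputable def grady {n m : ℕ} (g : (Fin n → ℝ) → (Fin m → ℝ) → ℝ)
    (x : Fin n → ℝ) (y : Fin m → ℝ) : Fin m → ℝ :=
  fun j => fderiv ℝ (fun y' => g x y') y (Pi.single j 1)

/-- The Hessian block `∇²ₓₓ g(x,y)`. -/
noncomputable def hessxx {n m : ℕ} (g : (Fin n → ℝ) → (Fin m → ℝ) → ℝ)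
    (x : Fin n → ℝ) (y : Fin m → ℝ) : Matrix (Fin n) (Fin n) ℝ :=
  Matrix.of fun i j => fderiv ℝ (fun x' => gradx g x' y j) x (Pi.single i 1)

/-- The Hessian block `∇²ᵧᵧ g(x,y)`. -/
noncomputable def hessyy {n m : ℕ} (g : (Fin n → ℝ) → (Fin m → ℝ) → ℝ)
    (x : Fin n → ℝ) (y : Fin m → ℝ) : Matrix (Fin m) (Fin m) ℝ :=
  Matrix.of fun i j => fderiv ℝ (fun y' => grady g x y' j) y (Pi.single i 1)

/-- `‖∇G(x,y)‖` where `∇G = (∇ₓg, -∇ᵧg)`. -/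
noncomputable def normG {n m : ℕ} (g : (Fin n → ℝ) → (Fin m → ℝ) → ℝ)
    (x : Fin n → ℝ) (y : Fin m → ℝ) : ℝ :=
  Real.sqrt (∑ i, gradx g x y i ^ 2 + ∑ j, grady g x y j ^ 2)

/-!
The saddle-point dynamics is the flow `z' = -(‖Φ‖ ^ (-α) + ‖Φ‖ ^ (-β)) Φ` of the field
`Φ = (∇ₓg, -∇ᵧg)`, with `α = (p - 2) / (p - 1) > 0 > β = (q - 2) / (q - 1)`. By the symmetry of
the second derivative the mixed blocks of `DΦ` cancel in `⟪DΦ v, v⟫`, so `Φ` is strongly monotone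
with modulus `μ = min μ₁ μ₂`. Hence `V = ‖Φ(z)‖² / 2` satisfies
`V' ≤ -μ (‖Φ‖ ^ (2 - α) + ‖Φ‖ ^ (2 - β)) = -(a V ^ γ₁ + b V ^ γ₂)` with `γ₁ < 1 < γ₂`. The
superlinear term alone brings `V` below `1` within time `1 / (b (γ₂ - 1))`, from any initial value,
and from there the sublinear term alone brings it to `0` within time `1 / (a (1 - γ₁))`.
-/

open Set WithLp
open scoped RealInnerProductSpace

section FixedTime

variable {V V' : ℝ → ℝ} {s t a b c γ γ₁ γ₂ : ℝ}

theorem nonpos_of_deriv_right_neg_of_pos (hst : s ≤ t) (hV : ContinuousOn V (Icc s t))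
    (hV' : ∀ r ∈ Ico s t, HasDerivWithinAt V (V' r) (Ici r) r)
    (hneg : ∀ r ∈ Ico s t, 0 < V r → V' r < 0) (hs : V s ≤ 0) : V t ≤ 0 := by
  refine le_of_forall_pos_le_add fun ε hε => ?_
  rw [zero_add]
  exact image_le_of_deriv_right_lt_deriv_boundary hV hV' (hs.trans hε.le)
    (fun r => hasDerivAt_const r ε) (fun r hr hVr => hneg r hr (hVr ▸ hε)) (right_mem_Icc.2 hst)

/-- Integrates `(V ^ (1 - γ) / (1 - γ))' = V ^ (-γ) V' ≤ -c`. -/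
theorem rpow_one_sub_div_le_of_deriv_right_le (hγ : γ ≠ 1) (hst : s ≤ t)
    (hV : ContinuousOn V (Icc s t))
    (hV' : ∀ r ∈ Ico s t, HasDerivWithinAt V (V' r) (Ici r) r)
    (hpos : ∀ r ∈ Icc s t, 0 < V r) (hle : ∀ r ∈ Ico s t, V' r ≤ -(c * V r ^ γ)) :
    V t ^ (1 - γ) / (1 - γ) ≤ V s ^ (1 - γ) / (1 - γ) - c * (t - s) := by
  have hγ' : 1 - γ ≠ 0 := sub_ne_zero.2 hγ.symm
  refine image_le_of_deriv_right_le_deriv_boundary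
    (f := fun r => V r ^ (1 - γ) / (1 - γ)) (f' := fun r => V' r * V r ^ (-γ))
    (B := fun r => V s ^ (1 - γ) / (1 - γ) - c * (r - s)) (B' := fun _ => -c)
    ((hV.rpow_const fun r hr => .inl (hpos r hr).ne').div_const _) (fun r hr => ?_)
    (by simp) (by fun_prop) (fun r _ => ?_) (fun r hr => ?_) (right_mem_Icc.2 hst)
  · refine (((hV' r hr).rpow_const (p := 1 - γ)
      (.inl (hpos r (Ico_subset_Icc_self hr)).ne')).div_const (1 - γ)).congr_deriv ?_
    rw [sub_sub_cancel_left]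
    field_simp
  · simpa using ((((hasDerivAt_id r).sub_const s).const_mul c).const_sub
      (V s ^ (1 - γ) / (1 - γ))).hasDerivWithinAt
  · have hVr := hpos r (Ico_subset_Icc_self hr)
    calc V' r * V r ^ (-γ) ≤ -(c * V r ^ γ) * V r ^ (-γ) := by gcongr; exact hle r hr
      _ = -(c * (V r ^ γ * V r ^ (-γ))) := by ring
      _ = -c := by rw [← Real.rpow_add hVr, add_neg_cancel, Real.rpow_zero, mul_one]

theorem lt_one_of_deriv_right_le_rpow (hγ : 1 < γ) (hb : 0 < b)
    (hst : 1 / (b * (γ - 1)) ≤ t - s) (hV : ContinuousOn V (Icc s t))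
    (hV' : ∀ r ∈ Ico s t, HasDerivWithinAt V (V' r) (Ici r) r)
    (hpos : ∀ r ∈ Icc s t, 0 < V r) (hle : ∀ r ∈ Ico s t, V' r ≤ -(b * V r ^ γ)) :
    V t < 1 := by
  have hγ' : 0 < γ - 1 := sub_pos.2 hγ
  have hs_le_t : s ≤ t := sub_nonneg.1 (le_trans (by positivity) hst)
  have hdecay := rpow_one_sub_div_le_of_deriv_right_le hγ.ne' hs_le_t hV hV' hpos hle
  have helapsed : 1 / (γ - 1) ≤ b * (t - s) := by
    rwa [mul_comm b, ← div_div, div_le_iff₀' hb] at hst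
  have hs_neg : V s ^ (1 - γ) / (1 - γ) < 0 :=
    div_neg_of_pos_of_neg (Real.rpow_pos_of_pos (hpos s (left_mem_Icc.2 hs_le_t)) _)
      (sub_neg.2 hγ)
  by_contra! hge
  have ht_ge : 1 / (1 - γ) ≤ V t ^ (1 - γ) / (1 - γ) :=
    div_le_div_of_nonpos_of_le (sub_neg.2 hγ).le
      (Real.rpow_le_one_of_one_le_of_nonpos hge (sub_neg.2 hγ).le)
  have hneg : 1 / (1 - γ) = -(1 / (γ - 1)) := by rw [← neg_sub γ 1, div_neg]
  linarith

theorem sub_lt_of_deriv_right_le_rpow (hγ : γ < 1) (ha : 0 < a) (hst : s ≤ t)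
    (hV : ContinuousOn V (Icc s t))
    (hV' : ∀ r ∈ Ico s t, HasDerivWithinAt V (V' r) (Ici r) r)
    (hpos : ∀ r ∈ Icc s t, 0 < V r) (hle : ∀ r ∈ Ico s t, V' r ≤ -(a * V r ^ γ))
    (hs : V s ≤ 1) : t - s < 1 / (a * (1 - γ)) := by
  have hγ' : 0 < 1 - γ := sub_pos.2 hγ
  have hdecay := rpow_one_sub_div_le_of_deriv_right_le hγ.ne hst hV hV' hpos hle
  have hs_le : V s ^ (1 - γ) / (1 - γ) ≤ 1 / (1 - γ) := by
    gcongr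
    exact Real.rpow_le_one (hpos s (left_mem_Icc.2 hst)).le hs hγ'.le
  have ht_pos : 0 < V t ^ (1 - γ) / (1 - γ) :=
    div_pos (Real.rpow_pos_of_pos (hpos t (right_mem_Icc.2 hst)) _) hγ'
  rw [mul_comm a, ← div_div, lt_div_iff₀ ha]
  linarith

theorem eq_zero_of_deriv_right_le_neg_rpow_add_rpow (ha : 0 < a) (hb : 0 < b) (hγ₁ : γ₁ < 1)
    (hγ₂ : 1 < γ₂) (hV : ContinuousOn V (Ici 0)) (hV0 : ∀ r, 0 ≤ r → 0 ≤ V r)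
    (hV' : ∀ r, 0 ≤ r → HasDerivWithinAt V (V' r) (Ici r) r)
    (hle : ∀ r, 0 ≤ r → 0 < V r → V' r ≤ -(a * V r ^ γ₁ + b * V r ^ γ₂))
    (ht : 1 / (a * (1 - γ₁)) + 1 / (b * (γ₂ - 1)) ≤ t) : V t = 0 := by
  set T := 1 / (b * (γ₂ - 1))
  have hT0 : 0 ≤ T := one_div_nonneg.2 (mul_nonneg hb.le (sub_nonneg.2 hγ₂.le))
  have hTt : T ≤ t :=
    (le_add_of_nonneg_left
      (one_div_nonneg.2 (mul_nonneg ha.le (sub_nonneg.2 hγ₁.le)))).trans ht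
  have ht0 : 0 ≤ t := hT0.trans hTt
  have hle₁ : ∀ r, 0 ≤ r → 0 < V r → V' r ≤ -(a * V r ^ γ₁) := fun r hr hVr =>
    (hle r hr hVr).trans (neg_le_neg (le_add_of_nonneg_right (by positivity)))
  have hle₂ : ∀ r, 0 ≤ r → 0 < V r → V' r ≤ -(b * V r ^ γ₂) := fun r hr hVr =>
    (hle r hr hVr).trans (neg_le_neg (le_add_of_nonneg_left (by positivity)))
  by_contra hne
  have hpos : ∀ r ∈ Icc 0 t, 0 < V r := by
    intro r hr
    by_contra! hr0
    refine hne (le_antisymm ?_ (hV0 t ht0))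
    exact nonpos_of_deriv_right_neg_of_pos hr.2
      (hV.mono fun u hu => hr.1.trans hu.1) (fun u hu => hV' u (hr.1.trans hu.1))
      (fun u hu hVu => (hle₁ u (hr.1.trans hu.1) hVu).trans_lt (neg_neg_of_pos (by positivity))) hr0
  have hVT : V T < 1 := lt_one_of_deriv_right_le_rpow hγ₂ hb (sub_zero T).ge
    (hV.mono Icc_subset_Ici_self) (fun r hr => hV' r hr.1)
    (fun r hr => hpos r ⟨hr.1, hr.2.trans hTt⟩)
    fun r hr => hle₂ r hr.1 (hpos r ⟨hr.1, hr.2.le.trans hTt⟩)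
  have hlt := sub_lt_of_deriv_right_le_rpow hγ₁ ha hTt
    (hV.mono fun r hr => hT0.trans hr.1) (fun r hr => hV' r (hT0.trans hr.1))
    (fun r hr => hpos r ⟨hT0.trans hr.1, hr.2⟩)
    (fun r hr => hle₁ r (hT0.trans hr.1) (hpos r ⟨hT0.trans hr.1, hr.2.le⟩)) hVT.le
  linarith

end FixedTime

section NormalizedFlow

theorem rpow_neg_mul_sq_eq {r : ℝ} (hr : 0 < r) (α : ℝ) :
    r ^ (-α) * r ^ 2 = 2 ^ (1 - α / 2) * (r ^ 2 / 2) ^ (1 - α / 2) := by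
  rw [← Real.mul_rpow zero_le_two (by positivity), mul_div_cancel₀ _ two_ne_zero,
    ← Real.rpow_natCast, ← Real.rpow_mul hr.le, ← Real.rpow_add hr]
  congr 1
  push_cast
  ring

variable {H : Type*} [NormedAddCommGroup H] [InnerProductSpace ℝ H]

theorem eq_zero_of_normalized_flow {Φ : H → H} {Φ' : H → H →L[ℝ] H}
    (hΦ : ∀ w, HasFDerivAt Φ (Φ' w) w) {μ : ℝ} (hμ : 0 < μ)
    (hmono : ∀ w, μ * ‖Φ w‖ ^ 2 ≤ ⟪Φ' w (Φ w), Φ w⟫) {α β : ℝ} (hα : 0 < α) (hβ : β < 0)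
    {z : ℝ → H} (hz : ContinuousOn z (Ici 0))
    (hz' : ∀ t, 0 ≤ t → HasDerivWithinAt z
      (-(‖Φ (z t)‖ ^ (-α) + ‖Φ (z t)‖ ^ (-β)) • Φ (z t)) (Ici t) t)
    {t : ℝ} (ht : 1 / (μ * 2 ^ (1 - α / 2) * (1 - (1 - α / 2))) +
      1 / (μ * 2 ^ (1 - β / 2) * (1 - β / 2 - 1)) ≤ t) :
    Φ (z t) = 0 := by
  set k : ℝ → ℝ := fun t => ‖Φ (z t)‖ ^ (-α) + ‖Φ (z t)‖ ^ (-β)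
  have henergy_deriv : ∀ t, 0 ≤ t → HasDerivWithinAt (fun s => ‖Φ (z s)‖ ^ 2 / 2)
      (-(k t * ⟪Φ' (z t) (Φ (z t)), Φ (z t)⟫)) (Ici t) t := fun t ht => by
    refine (((hΦ (z t)).comp_hasDerivWithinAt t (hz' t ht)).norm_sq.div_const 2).congr_deriv ?_
    simp only [Function.comp_apply, map_smul, inner_smul_right, real_inner_comm (Φ (z t))]
    ring
  have henergy_decay : ∀ t, 0 ≤ t → 0 < ‖Φ (z t)‖ ^ 2 / 2 →
      -(k t * ⟪Φ' (z t) (Φ (z t)), Φ (z t)⟫) ≤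
        -(μ * 2 ^ (1 - α / 2) * (‖Φ (z t)‖ ^ 2 / 2) ^ (1 - α / 2) +
          μ * 2 ^ (1 - β / 2) * (‖Φ (z t)‖ ^ 2 / 2) ^ (1 - β / 2)) := fun t _ hpos => by
    have hnorm : 0 < ‖Φ (z t)‖ := (norm_nonneg _).lt_of_ne' fun h => by simp [h] at hpos
    rw [mul_assoc, mul_assoc, ← rpow_neg_mul_sq_eq hnorm, ← rpow_neg_mul_sq_eq hnorm]
    calc -(k t * ⟪Φ' (z t) (Φ (z t)), Φ (z t)⟫) ≤ -(k t * (μ * ‖Φ (z t)‖ ^ 2)) := by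
          gcongr; exact hmono (z t)
      _ = _ := by ring
  have hcont : Continuous Φ := continuous_iff_continuousAt.2 fun w => (hΦ w).continuousAt
  have hzero : ‖Φ (z t)‖ ^ 2 / 2 = 0 :=
    eq_zero_of_deriv_right_le_neg_rpow_add_rpow (V := fun s => ‖Φ (z s)‖ ^ 2 / 2)
      (by positivity) (by positivity) (by linarith) (by linarith)
      (((hcont.comp_continuousOn hz).norm.pow 2).div_const 2)
      (fun _ _ => by positivity) henergy_deriv henergy_decay ht
  simpa using hzero

end NormalizedFlow

section PartialDerivatives

variable {n m : ℕ} {g : (Fin n → ℝ) → (Fin m → ℝ) → ℝ}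

theorem gradx_eq_fderiv_uncurry (hg : Differentiable ℝ (Function.uncurry g)) (x : Fin n → ℝ)
    (y : Fin m → ℝ) (i : Fin n) :
    gradx g x y i = fderiv ℝ (Function.uncurry g) (x, y) (Pi.single i 1, 0) := by
  have h := ((hg (x, y)).hasFDerivAt.comp x (hasFDerivAt_prodMk_left (𝕜 := ℝ) x y)).fderiv
  simp only [Function.comp_def, Function.uncurry_apply_pair] at h
  simp [gradx, h]

theorem grady_eq_fderiv_uncurry (hg : Differentiable ℝ (Function.uncurry g)) (x : Fin n → ℝ)
    (y : Fin m → ℝ) (j : Fin m) :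
    grady g x y j = fderiv ℝ (Function.uncurry g) (x, y) (0, Pi.single j 1) := by
  have h := ((hg (x, y)).hasFDerivAt.comp y (hasFDerivAt_prodMk_right (𝕜 := ℝ) x y)).fderiv
  simp only [Function.comp_def, Function.uncurry_apply_pair] at h
  simp [grady, h]

theorem hessxx_eq_fderiv_fderiv_uncurry (hg : Differentiable ℝ (Function.uncurry g))
    (hg' : Differentiable ℝ (fderiv ℝ (Function.uncurry g))) (x : Fin n → ℝ) (y : Fin m → ℝ)
    (i j : Fin n) :
    hessxx g x y i j = fderiv ℝ (fderiv ℝ (Function.uncurry g)) (x, y)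
      (Pi.single i 1, 0) (Pi.single j 1, 0) := by
  have h := (((hg' (x, y)).hasFDerivAt.comp x (hasFDerivAt_prodMk_left (𝕜 := ℝ) x y)).clm_apply
    (hasFDerivAt_const ((Pi.single j 1, 0) : (Fin n → ℝ) × (Fin m → ℝ)) x)).fderiv
  simp only [Function.comp_apply, ← gradx_eq_fderiv_uncurry hg] at h
  simp [hessxx, h]

theorem hessyy_eq_fderiv_fderiv_uncurry (hg : Differentiable ℝ (Function.uncurry g))
    (hg' : Differentiable ℝ (fderiv ℝ (Function.uncurry g))) (x : Fin n → ℝ) (y : Fin m → ℝ)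
    (i j : Fin m) :
    hessyy g x y i j = fderiv ℝ (fderiv ℝ (Function.uncurry g)) (x, y)
      (0, Pi.single i 1) (0, Pi.single j 1) := by
  have h := (((hg' (x, y)).hasFDerivAt.comp y (hasFDerivAt_prodMk_right (𝕜 := ℝ) x y)).clm_apply
    (hasFDerivAt_const ((0, Pi.single j 1) : (Fin n → ℝ) × (Fin m → ℝ)) y)).fderiv
  simp only [Function.comp_apply, ← grady_eq_fderiv_uncurry hg] at h
  simp [hessyy, h]

theorem sum_mul_apply_single {R ι : Type*} [CommSemiring R] [Fintype ι] [DecidableEq ι]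
    (L : (ι → R) →ₗ[R] R) (u : ι → R) : ∑ i, u i * L (Pi.single i 1) = L u := by
  conv_rhs => rw [pi_eq_sum_univ' u, map_sum]
  simp only [map_smul, smul_eq_mul]

theorem sum_sum_mul_apply_single_mul {R ι : Type*} [CommSemiring R] [Fintype ι] [DecidableEq ι]
    (B : (ι → R) →ₗ[R] (ι → R) →ₗ[R] R) (u : ι → R) :
    ∑ i, ∑ j, u i * B (Pi.single i 1) (Pi.single j 1) * u j = B u u := by
  calc ∑ i, ∑ j, u i * B (Pi.single i 1) (Pi.single j 1) * u j
      = ∑ i, u i * B.flip u (Pi.single i 1) := by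
        simp only [LinearMap.flip_apply, ← sum_mul_apply_single (B _) u, Finset.mul_sum]
        exact Finset.sum_congr rfl fun i _ => Finset.sum_congr rfl fun j _ => by ring
    _ = B u u := sum_mul_apply_single _ u

theorem sum_sum_mul_hessxx_mul (hg : Differentiable ℝ (Function.uncurry g))
    (hg' : Differentiable ℝ (fderiv ℝ (Function.uncurry g))) (x : Fin n → ℝ) (y : Fin m → ℝ)
    (u : Fin n → ℝ) :
    ∑ i, ∑ j, u i * hessxx g x y i j * u j =
      fderiv ℝ (fderiv ℝ (Function.uncurry g)) (x, y) (u, 0) (u, 0) := by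
  simp only [hessxx_eq_fderiv_fderiv_uncurry hg hg']
  exact sum_sum_mul_apply_single_mul
    ((fderiv ℝ (fderiv ℝ (Function.uncurry g)) (x, y)).toLinearMap₁₂.compl₁₂
      (LinearMap.inl ℝ _ _) (LinearMap.inl ℝ _ _)) u

theorem sum_sum_mul_hessyy_mul (hg : Differentiable ℝ (Function.uncurry g))
    (hg' : Differentiable ℝ (fderiv ℝ (Function.uncurry g))) (x : Fin n → ℝ) (y : Fin m → ℝ)
    (w : Fin m → ℝ) :
    ∑ i, ∑ j, w i * hessyy g x y i j * w j =
      fderiv ℝ (fderiv ℝ (Function.uncurry g)) (x, y) (0, w) (0, w) := by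
  simp only [hessyy_eq_fderiv_fderiv_uncurry hg hg']
  exact sum_sum_mul_apply_single_mul
    ((fderiv ℝ (fderiv ℝ (Function.uncurry g)) (x, y)).toLinearMap₁₂.compl₁₂
      (LinearMap.inr ℝ _ _) (LinearMap.inr ℝ _ _)) w

end PartialDerivatives

section SaddleField

variable {n m : ℕ} {g : (Fin n → ℝ) → (Fin m → ℝ) → ℝ}

/-- The blocks `(x, y)` of a point of `ℝⁿ⁺ᵐ`. The Euclidean space carries the norm of the
statement, the product of function spaces the sup norm. -/
noncomputable def blocks (n m : ℕ) :
    EuclideanSpace ℝ (Fin n ⊕ Fin m) →L[ℝ] (Fin n → ℝ) × (Fin m → ℝ) :=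
  (ContinuousLinearMap.pi fun i => EuclideanSpace.proj (Sum.inl i)).prod
    (ContinuousLinearMap.pi fun j => EuclideanSpace.proj (Sum.inr j))

/-- The field `∇G = (∇ₓg, -∇ᵧg)` on `ℝⁿ⁺ᵐ`. -/
noncomputable def saddleField (g : (Fin n → ℝ) → (Fin m → ℝ) → ℝ)
    (z : EuclideanSpace ℝ (Fin n ⊕ Fin m)) : EuclideanSpace ℝ (Fin n ⊕ Fin m) :=
  toLp 2 (Sum.elim (gradx g (blocks n m z).1 (blocks n m z).2)
    (-grady g (blocks n m z).1 (blocks n m z).2))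

theorem norm_saddleField (g : (Fin n → ℝ) → (Fin m → ℝ) → ℝ)
    (z : EuclideanSpace ℝ (Fin n ⊕ Fin m)) :
    ‖saddleField g z‖ = normG g (blocks n m z).1 (blocks n m z).2 := by
  simp [EuclideanSpace.norm_eq, saddleField, normG]

theorem norm_sq_eq_sum_blocks (v : EuclideanSpace ℝ (Fin n ⊕ Fin m)) :
    ‖v‖ ^ 2 = ∑ i, (blocks n m v).1 i ^ 2 + ∑ j, (blocks n m v).2 j ^ 2 := by
  simp [EuclideanSpace.real_norm_sq_eq, blocks]

theorem inner_saddleField (hg : Differentiable ℝ (Function.uncurry g))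
    (z v : EuclideanSpace ℝ (Fin n ⊕ Fin m)) :
    ⟪saddleField g z, v⟫ =
      fderiv ℝ (Function.uncurry g) (blocks n m z) ((blocks n m v).1, -(blocks n m v).2) := by
  set L := fderiv ℝ (Function.uncurry g) (blocks n m z)
  calc ⟪saddleField g z, v⟫
      = ∑ i, (blocks n m v).1 i * L (Pi.single i 1, 0) +
          ∑ j, (-(blocks n m v).2) j * L (0, Pi.single j 1) := by
        simp [L, PiLp.inner_apply, saddleField, blocks, gradx_eq_fderiv_uncurry hg,
          grady_eq_fderiv_uncurry hg]
    _ = L ((blocks n m v).1, 0) + L (0, -(blocks n m v).2) :=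
        congr_arg₂ (· + ·) (sum_mul_apply_single (L.toLinearMap ∘ₗ LinearMap.inl ℝ _ _) _)
          (sum_mul_apply_single (L.toLinearMap ∘ₗ LinearMap.inr ℝ _ _) _)
    _ = L ((blocks n m v).1, -(blocks n m v).2) := by
        rw [← map_add, Prod.mk_add_mk, add_zero, zero_add]

theorem differentiable_saddleField (hg : Differentiable ℝ (Function.uncurry g))
    (hg' : Differentiable ℝ (fderiv ℝ (Function.uncurry g))) :
    Differentiable ℝ (saddleField g) := by
  refine differentiable_euclidean.2 (Sum.rec (fun i => ?_) fun j => ?_)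
  · simp only [saddleField, Sum.elim_inl, gradx_eq_fderiv_uncurry hg]
    fun_prop
  · simp only [saddleField, Sum.elim_inr, Pi.neg_apply, grady_eq_fderiv_uncurry hg]
    fun_prop

theorem inner_fderiv_saddleField (hg : Differentiable ℝ (Function.uncurry g))
    (hg' : Differentiable ℝ (fderiv ℝ (Function.uncurry g)))
    (z v w : EuclideanSpace ℝ (Fin n ⊕ Fin m)) :
    ⟪fderiv ℝ (saddleField g) z v, w⟫ =
      fderiv ℝ (fderiv ℝ (Function.uncurry g)) (blocks n m z) (blocks n m v)
        ((blocks n m w).1, -(blocks n m w).2) := by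
  have hinner := (differentiable_saddleField hg hg' z).hasFDerivAt.inner ℝ (hasFDerivAt_const w z)
  simp only [inner_saddleField hg] at hinner
  have hcomp := ((hg' (blocks n m z)).hasFDerivAt.comp z (blocks n m).hasFDerivAt).clm_apply
    (hasFDerivAt_const ((blocks n m w).1, -(blocks n m w).2) z)
  simpa using DFunLike.congr_fun (hinner.unique hcomp) v

theorem inner_fderiv_saddleField_self (hg : Differentiable ℝ (Function.uncurry g))
    (hg' : Differentiable ℝ (fderiv ℝ (Function.uncurry g)))
    (z v : EuclideanSpace ℝ (Fin n ⊕ Fin m)) :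
    ⟪fderiv ℝ (saddleField g) z v, v⟫ =
      fderiv ℝ (fderiv ℝ (Function.uncurry g)) (blocks n m z) ((blocks n m v).1, 0)
        ((blocks n m v).1, 0) -
      fderiv ℝ (fderiv ℝ (Function.uncurry g)) (blocks n m z) (0, (blocks n m v).2)
        (0, (blocks n m v).2) := by
  rw [inner_fderiv_saddleField hg hg']
  generalize blocks n m v = uw
  obtain ⟨u, w⟩ := uw
  set D := fderiv ℝ (fderiv ℝ (Function.uncurry g)) (blocks n m z)
  have hsymm : D (u, 0) (0, w) = D (0, w) (u, 0) :=
    second_derivative_symmetric (fun r => (hg r).hasFDerivAt) (hg' (blocks n m z)).hasFDerivAt _ _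
  have hadd : (u, w) = (u, 0) + (0, w) := by simp
  have hsub : (u, -w) = (u, 0) - (0, w) := by simp
  calc D (u, w) (u, -w) = D ((u, 0) + (0, w)) ((u, 0) - (0, w)) := by rw [← hadd, ← hsub]
    _ = D (u, 0) (u, 0) - D (0, w) (0, w) := by
        simp only [map_add, map_sub, add_apply]
        linarith

theorem min_mul_norm_sq_le_inner_fderiv_saddleField (hg : Differentiable ℝ (Function.uncurry g))
    (hg' : Differentiable ℝ (fderiv ℝ (Function.uncurry g))) {μ₁ μ₂ : ℝ}
    (hxx : ∀ x y (u : Fin n → ℝ),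
      μ₁ * ∑ i, u i ^ 2 ≤ ∑ i, ∑ j, u i * hessxx g x y i j * u j)
    (hyy : ∀ x y (w : Fin m → ℝ),
      ∑ i, ∑ j, w i * hessyy g x y i j * w j ≤ -μ₂ * ∑ j, w j ^ 2)
    (z v : EuclideanSpace ℝ (Fin n ⊕ Fin m)) :
    min μ₁ μ₂ * ‖v‖ ^ 2 ≤ ⟪fderiv ℝ (saddleField g) z v, v⟫ := by
  rw [inner_fderiv_saddleField_self hg hg', norm_sq_eq_sum_blocks, mul_add]
  set u := (blocks n m v).1
  set w := (blocks n m v).2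
  have hu := hxx (blocks n m z).1 (blocks n m z).2 u
  have hw := hyy (blocks n m z).1 (blocks n m z).2 w
  rw [sum_sum_mul_hessxx_mul hg hg'] at hu
  rw [sum_sum_mul_hessyy_mul hg hg'] at hw
  have hμu : min μ₁ μ₂ * ∑ i, u i ^ 2 ≤ μ₁ * ∑ i, u i ^ 2 := by gcongr; exact min_le_left _ _
  have hμw : min μ₁ μ₂ * ∑ j, w j ^ 2 ≤ μ₂ * ∑ j, w j ^ 2 := by gcongr; exact min_le_right _ _
  linarith

/-- A trajectory on `[0, ∞)` of the normalized saddle-point dynamics. One formula covers both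
cases of the dynamics, since its right-hand side vanishes where `∇G` does. -/
def IsNormalizedSaddleFlow (g : (Fin n → ℝ) → (Fin m → ℝ) → ℝ) (p q : ℝ)
    (x : ℝ → (Fin n → ℝ)) (y : ℝ → (Fin m → ℝ)) : Prop :=
  ∀ t, 0 ≤ t →
    (∀ i, HasDerivWithinAt (fun s => x s i)
      (-gradx g (x t) (y t) i *
        (normG g (x t) (y t) ^ (-((p - 2) / (p - 1))) +
          normG g (x t) (y t) ^ (-((q - 2) / (q - 1))))) (Ici 0) t) ∧
    (∀ j, HasDerivWithinAt (fun s => y s j)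
      (grady g (x t) (y t) j *
        (normG g (x t) (y t) ^ (-((p - 2) / (p - 1))) +
          normG g (x t) (y t) ^ (-((q - 2) / (q - 1))))) (Ici 0) t)

theorem IsNormalizedSaddleFlow.hasDerivWithinAt_toLp {p q : ℝ} {x : ℝ → (Fin n → ℝ)}
    {y : ℝ → (Fin m → ℝ)} (h : IsNormalizedSaddleFlow g p q x y) {t : ℝ} (ht : 0 ≤ t) :
    let z : ℝ → EuclideanSpace ℝ (Fin n ⊕ Fin m) := fun s => toLp 2 (Sum.elim (x s) (y s))
    HasDerivWithinAt z (-(‖saddleField g (z t)‖ ^ (-((p - 2) / (p - 1))) +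
      ‖saddleField g (z t)‖ ^ (-((q - 2) / (q - 1)))) • saddleField g (z t)) (Ici 0) t := by
  intro z
  have hblocks : blocks n m (z t) = (x t, y t) := rfl
  rw [norm_saddleField, hblocks]
  have hpi : HasDerivWithinAt (fun s => Sum.elim (x s) (y s)) (Sum.elim _ _) (Ici 0) t :=
    hasDerivWithinAt_pi.2 (Sum.rec (h t ht).1 (h t ht).2)
  refine ((PiLp.continuousLinearEquiv 2 ℝ fun _ : Fin n ⊕ Fin m => ℝ).symm.hasFDerivAt
    |>.comp_hasDerivWithinAt t hpi).congr_deriv ?_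
  ext (i | j) <;>
  · simp only [saddleField, hblocks, ContinuousLinearEquiv.coe_coe,
      PiLp.continuousLinearEquiv_symm_apply, PiLp.smul_apply, Sum.elim_inl, Sum.elim_inr,
      Pi.neg_apply, smul_eq_mul]
    ring

theorem saddleField_eq_zero_iff {z : EuclideanSpace ℝ (Fin n ⊕ Fin m)} :
    saddleField g z = 0 ↔ gradx g (blocks n m z).1 (blocks n m z).2 = 0 ∧
      grady g (blocks n m z).1 (blocks n m z).2 = 0 := by
  simp [saddleField, funext_iff]

theorem div_two_mul_sub_one_eq {p : ℝ} (hp : p ≠ 1) :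
    p / (2 * (p - 1)) = 1 - (p - 2) / (p - 1) / 2 := by
  have := sub_ne_zero.2 hp
  field_simp
  ring

end SaddleField

theorem saddle_point_dynamics_fixed_time_convergence_general
    {n m : ℕ} (g : (Fin n → ℝ) → (Fin m → ℝ) → ℝ)
    (hg : Differentiable ℝ (Function.uncurry g))
    (hg' : Differentiable ℝ (fderiv ℝ (Function.uncurry g)))
    (μ₁ μ₂ : ℝ) (hμ₁ : 0 < μ₁) (hμ₂ : 0 < μ₂)
    (hxx : ∀ x y (u : Fin n → ℝ),
      μ₁ * ∑ i, u i ^ 2 ≤ ∑ i, ∑ j, u i * hessxx g x y i j * u j)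
    (hyy : ∀ x y (w : Fin m → ℝ),
      ∑ i, ∑ j, w i * hessyy g x y i j * w j ≤ -μ₂ * ∑ j, w j ^ 2)
    (p q : ℝ) (hp : 2 < p) (hq : q ∈ Ioo (1 : ℝ) 2)
    (x : ℝ → (Fin n → ℝ)) (y : ℝ → (Fin m → ℝ)) (hflow : IsNormalizedSaddleFlow g p q x y)
    (t : ℝ)
    (ht : 1 / (min μ₁ μ₂ * 2 ^ (p / (2 * (p - 1))) * (1 - p / (2 * (p - 1)))) +
      1 / (min μ₁ μ₂ * 2 ^ (q / (2 * (q - 1))) * (q / (2 * (q - 1)) - 1)) ≤ t) :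
    gradx g (x t) (y t) = 0 ∧ grady g (x t) (y t) = 0 := by
  have hp1 : 1 < p := one_lt_two.trans hp
  rw [div_two_mul_sub_one_eq hp1.ne', div_two_mul_sub_one_eq hq.1.ne'] at ht
  exact saddleField_eq_zero_iff.1 <| eq_zero_of_normalized_flow
    (fun w => (differentiable_saddleField hg hg' w).hasFDerivAt) (lt_min hμ₁ hμ₂)
    (fun w => min_mul_norm_sq_le_inner_fderiv_saddleField hg hg' hxx hyy w _)
    (div_pos (sub_pos.2 hp) (sub_pos.2 hp1))
    (div_neg_of_neg_of_pos (sub_neg.2 hq.2) (sub_pos.2 hq.1))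
    (fun s hs => (hflow.hasDerivWithinAt_toLp hs).continuousWithinAt)
    (fun s hs => (hflow.hasDerivWithinAt_toLp hs).mono (Ici_subset_Ici.2 hs)) ht

/-- **Fixed-time convergence to the saddle point of a minimax problem (Theorem 4).**
For a `C²`, strongly convex-strongly concave function `g` with unique stationary point
`(x*, y*)`, the normalized saddle-point dynamics reaches `(x*, y*)` by time
`T̄ = 1/(a(1-γ₁)) + 1/(b(γ₂-1))` with `γ₁ = p/(2(p-1))`, `γ₂ = q/(2(q-1))`,
`a = min(μ₁,μ₂) 2^{γ₁}`, `b = min(μ₁,μ₂) 2^{γ₂}`. -/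
theorem saddle_point_dynamics_fixed_time_convergence
    {n m : ℕ} (g : (Fin n → ℝ) → (Fin m → ℝ) → ℝ)
    (hg : ContDiff ℝ 2 (fun z : (Fin n → ℝ) × (Fin m → ℝ) => g z.1 z.2))
    (μ₁ μ₂ : ℝ) (hμ₁ : 0 < μ₁) (hμ₂ : 0 < μ₂)
    (hxx : ∀ x y (u : Fin n → ℝ),
      μ₁ * ∑ i, u i ^ 2 ≤ ∑ i, ∑ j, u i * hessxx g x y i j * u j)
    (hyy : ∀ x y (w : Fin m → ℝ),
      ∑ i, ∑ j, w i * hessyy g x y i j * w j ≤ -μ₂ * ∑ j, w j ^ 2)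
    (xstar : Fin n → ℝ) (ystar : Fin m → ℝ)
    (hstat : gradx g xstar ystar = 0 ∧ grady g xstar ystar = 0)
    (huniq : ∀ x' y', gradx g x' y' = 0 → grady g x' y' = 0 →
      x' = xstar ∧ y' = ystar)
    (p q : ℝ) (hp : 2 < p) (hq : q ∈ Set.Ioo (1 : ℝ) 2)
    (x : ℝ → (Fin n → ℝ)) (y : ℝ → (Fin m → ℝ))
    (hdyn : ∀ t : ℝ, 0 ≤ t →
      ¬(gradx g (x t) (y t) = 0 ∧ grady g (x t) (y t) = 0) →
      (∀ i, HasDerivAt (fun s => x s i)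
        (-gradx g (x t) (y t) i *
          (normG g (x t) (y t) ^ (-((p - 2) / (p - 1))) +
            normG g (x t) (y t) ^ (-((q - 2) / (q - 1))))) t) ∧
      (∀ j, HasDerivAt (fun s => y s j)
        (grady g (x t) (y t) j *
          (normG g (x t) (y t) ^ (-((p - 2) / (p - 1))) +
            normG g (x t) (y t) ^ (-((q - 2) / (q - 1))))) t))
    (hdyn0 : ∀ t : ℝ, 0 ≤ t →
      (gradx g (x t) (y t) = 0 ∧ grady g (x t) (y t) = 0) →
      (∀ i, HasDerivAt (fun s => x s i) 0 t) ∧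
      (∀ j, HasDerivAt (fun s => y s j) 0 t)) :
    ∀ t : ℝ,
      1 / (min μ₁ μ₂ * 2 ^ (p / (2 * (p - 1))) * (1 - p / (2 * (p - 1)))) +
        1 / (min μ₁ μ₂ * 2 ^ (q / (2 * (q - 1))) * (q / (2 * (q - 1)) - 1)) ≤ t →
      x t = xstar ∧ y t = ystar := by
  have hflow : IsNormalizedSaddleFlow g p q x y := fun t ht => by
    refine And.imp (forall_imp fun _ => HasDerivAt.hasDerivWithinAt)
      (forall_imp fun _ => HasDerivAt.hasDerivWithinAt) ?_
    by_cases h : gradx g (x t) (y t) = 0 ∧ grady g (x t) (y t) = 0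
    · simpa only [h.1, h.2, Pi.zero_apply, neg_zero, zero_mul] using hdyn0 t ht h
    · exact hdyn t ht h
  intro t ht
  obtain ⟨hx, hy⟩ := saddle_point_dynamics_fixed_time_convergence_general g
    (hg.differentiable two_ne_zero)
    ((hg.fderiv_right (m := 1) one_add_one_eq_two.le).differentiable one_ne_zero)
    μ₁ μ₂ hμ₁ hμ₂ hxx hyy p q hp hq x y hflow t ht
  exact huniq (x t) (y t) hx hy
end
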